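/- arXiv:2402.10451 — 3 statements merged into one kernel-verified Lean document; each statement's English description precedes it below -/
import Mathlib

section
/- Let f₁,…,f_n be monotone linear functions that are not colinear. Then the following are equivalent: (1) f₁,…,f_n are potentially identical; (2) a permutation σ of [n] is minimum if and only if it is counterclockwise. -/
/-- A linear function `x ↦ a*x + b`. -/
structure LinFun where
  a : ℝ
  b : ℝ

namespace LinFun

/-- Evaluation of a linear function. -/
def eval (f : LinFun) (x : ℝ) : ℝ := f.a * x + f.b

/-- Composition: `h.comp g` is the linear function `x ↦ h (g x)`. -/
def comp (h g : LinFun) : LinFun := ⟨h.a * g.a, h.a * g.b + h.b⟩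

/-- The identical linear function `x ↦ x`. -/
def idf : LinFun := ⟨1, 0⟩

/-- `f` is the identical function (equivalently, its vector `(β f, 1 - α f)` is `(0,0)`,
i.e. its angle is `⊥`). -/
def IsId (f : LinFun) : Prop := f = idf

/-- The Euclidean norm of the vector `(β f, 1 - α f)` associated to `f`. -/
noncomputable def vecNorm (f : LinFun) : ℝ := Real.sqrt (f.b ^ 2 + (1 - f.a) ^ 2)

/-- The polar angle in `[0, 2π)` of the vector `(β f, 1 - α f)` associated to `f`
(meaningful only when `f` is not identical). -/
noncomputable def theta (f : LinFun) : ℝ :=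
  if 0 ≤ Complex.arg ⟨f.b, 1 - f.a⟩ then Complex.arg ⟨f.b, 1 - f.a⟩
  else Complex.arg ⟨f.b, 1 - f.a⟩ + 2 * Real.pi

end LinFun

/-- Congruence of angles modulo `2π`: `x ≡_{2π} y`. -/
def Cong (x y : ℝ) : Prop := ∃ k : ℤ, x - y = 2 * Real.pi * k

/-- The set `[t1, t2]_{2π}`. -/
def Icc2pi (t1 t2 : ℝ) : Set ℝ :=
  {θ | ∃ l1 l2 : ℝ, Cong l1 t1 ∧ Cong l2 t2 ∧ 0 ≤ l2 - l1 ∧ l2 - l1 < 2 * Real.pi ∧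
    θ ∈ Set.Icc l1 l2}

/-- The set `(t1, t2)_{2π}`. -/
def Ioo2pi (t1 t2 : ℝ) : Set ℝ :=
  {θ | ∃ l1 l2 : ℝ, Cong l1 t1 ∧ Cong l2 t2 ∧ 0 ≤ l2 - l1 ∧ l2 - l1 < 2 * Real.pi ∧
    θ ∈ Set.Ioo l1 l2}

/-- Composite of a list of linear functions: `compList [g₁, …, g_m] = g_m ∘ ⋯ ∘ g₁`. -/
def compList (L : List LinFun) : LinFun := L.foldl (fun acc g => g.comp acc) LinFun.idf

/-- The list `f_{σ(1)}, …, f_{σ(n)}` (0-indexed positions). -/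
def permList {n : ℕ} (f : Fin n → LinFun) (σ : Equiv.Perm (Fin n)) : List LinFun :=
  List.ofFn fun i => f (σ i)

/-- `f^σ = f_{σ(n)} ∘ ⋯ ∘ f_{σ(1)}`. -/
def permComp {n : ℕ} (f : Fin n → LinFun) (σ : Equiv.Perm (Fin n)) : LinFun :=
  compList (permList f σ)

/-- The composite of the functions at the (0-indexed) positions `a, a+1, …, b` of `σ`:
`f_{σ(b)} ∘ ⋯ ∘ f_{σ(a)}` (in 0-indexed notation). -/
def segComp {n : ℕ} (f : Fin n → LinFun) (σ : Equiv.Perm (Fin n)) (a b : ℕ) : LinFun :=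
  compList (((permList f σ).drop a).take (b + 1 - a))

/-- The composite corresponding to the `k`-shift `σ_k` of `σ`:
`f^{σ_k} = f_{σ(k)} ∘ ⋯ ∘ f_{σ(1)} ∘ f_{σ(n)} ∘ ⋯ ∘ f_{σ(k+1)}` (1-indexed notation). -/
def shiftComp {n : ℕ} (f : Fin n → LinFun) (σ : Equiv.Perm (Fin n)) (k : ℕ) : LinFun :=
  compList ((permList f σ).rotate k)

/-- `σ` is a minimum (optimal) permutation for `f₁, …, f_n`. -/
def IsMinimum {n : ℕ} (f : Fin n → LinFun) (σ : Equiv.Perm (Fin n)) : Prop :=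
  ∀ ρ : Equiv.Perm (Fin n), (permComp f σ).b ≤ (permComp f ρ).b

/-- `μ` belongs to the neighbourhood `N(σ)`: it is obtained from `σ` by swapping two
adjacent blocks of positions, `(l, …, m)` and `(m+1, …, r)` (0-indexed, `l ≤ m < r < n`). -/
def InNbhd {n : ℕ} (σ μ : Equiv.Perm (Fin n)) : Prop :=
  ∃ (l m r : ℕ) (_ : l ≤ m) (_ : m < r) (_ : r < n),
    (∀ i : Fin n, (i.val < l ∨ r < i.val) → μ i = σ i) ∧
    (∀ i : Fin n, ∀ _ : l ≤ i.val, ∀ _ : i.val < l + r - m,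
      μ i = σ ⟨i.val + m + 1 - l, by omega⟩) ∧
    (∀ i : Fin n, ∀ _ : l + r - m ≤ i.val, ∀ _ : i.val ≤ r,
      μ i = σ ⟨i.val + m - r, by omega⟩)

/-- `σ` is locally optimal for `f₁, …, f_n`. -/
def LocallyOptimal {n : ℕ} (f : Fin n → LinFun) (σ : Equiv.Perm (Fin n)) : Prop :=
  ∀ μ : Equiv.Perm (Fin n), InNbhd σ μ → (permComp f σ).b ≤ (permComp f μ).b

/-- `σ` is counterclockwise: ignoring the identical functions, some rotation of the sequence
of angles `θ(f_{σ(1)}), …, θ(f_{σ(n)})` is nondecreasing. -/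
def Counterclockwise {n : ℕ} (f : Fin n → LinFun) (σ : Equiv.Perm (Fin n)) : Prop :=
  ∃ c : ℕ, ∀ i j : Fin n, ¬ (f (σ i)).IsId → ¬ (f (σ j)).IsId →
    ((c ≤ i.val ∧ i ≤ j) ∨ (i ≤ j ∧ j.val < c) ∨ (c ≤ i.val ∧ j.val < c)) →
    (f (σ i)).theta ≤ (f (σ j)).theta

/-- `f₁, …, f_n` are colinear: all vectors lie on one line through the origin. -/
def Colinear {n : ℕ} (f : Fin n → LinFun) : Prop :=
  ∃ lam : ℝ, ∀ i : Fin n,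
    (f i).IsId ∨ Cong ((f i).theta) lam ∨ Cong ((f i).theta) (lam + Real.pi)

/-- `f₁, …, f_n` are potentially identical: some counterclockwise permutation composes
to the identical function. -/
def PotentiallyIdentical {n : ℕ} (f : Fin n → LinFun) : Prop :=
  ∃ σ : Equiv.Perm (Fin n), Counterclockwise f σ ∧ (permComp f σ).IsId

/-- The ε-perturbation `f^{(ε)}` of a linear function. -/
noncomputable def epsPert (f : LinFun) (ε : ℝ) : LinFun := if f.a = 0 then ⟨ε, f.b⟩ else f

namespace S3

def det (u w : ℝ × ℝ) : ℝ := u.1 * w.2 - u.2 * w.1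

def Ps (u : ℝ × ℝ) : Prop := 0 < u.2 ∨ (u.2 = 0 ∧ 0 < u.1)

def NN (u : ℝ × ℝ) : Prop := 0 < u.2 ∨ (u.2 = 0 ∧ 0 ≤ u.1)

def T (p q r : ℝ × ℝ) : ℝ := det (q - p) (r - p)

lemma nn_total (u : ℝ × ℝ) : NN u ∨ Ps (-u) := by
  unfold NN Ps
  simp only [Prod.fst_neg, Prod.snd_neg]
  rcases lt_trichotomy u.2 0 with h | h | h
  · right; left; linarith
  · rcases le_or_gt 0 u.1 with h' | h'
    · left; right; exact ⟨h, h'⟩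
    · right; right; constructor <;> linarith
  · left; left; exact h

lemma nn_not (u : ℝ × ℝ) (h : NN u) (h' : Ps (-u)) : False := by
  unfold NN Ps at *
  simp only [Prod.fst_neg, Prod.snd_neg] at *
  rcases h with h | ⟨h, g⟩ <;> rcases h' with h' | ⟨h', g'⟩ <;> linarith

lemma ps_nn (u : ℝ × ℝ) (h : Ps u) : NN u := by
  rcases h with h | h
  · left; exact h
  · right; exact ⟨h.1, h.2.le⟩

lemma ps_of_not {u : ℝ × ℝ} (h : ¬ Ps u) (h0 : u ≠ 0) : Ps (-u) := by
  rcases nn_total u with h1 | h1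
  · exfalso
    rcases h1 with h1 | ⟨h1, h2⟩
    · exact h (Or.inl h1)
    · rcases h2.lt_or_eq with h3 | h3
      · exact h (Or.inr ⟨h1, h3⟩)
      · exact h0 (Prod.ext h3.symm h1)
  · exact h1

lemma nn_antisymm (u : ℝ × ℝ) (h : NN u) (h' : NN (-u)) : u = 0 := by
  unfold NN at *
  simp only [Prod.fst_neg, Prod.snd_neg] at *
  rcases h with h | ⟨h, g⟩ <;> rcases h' with h' | ⟨h', g'⟩
  · linarith
  · linarith
  · linarith
  · ext
    · simp only [Prod.fst_zero]; linarith
    · simp only [Prod.snd_zero]; linarith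

lemma nn_comb (u w : ℝ × ℝ) (s t : ℝ) (hu : NN u) (hw : NN w) (hs : 0 ≤ s) (ht : 0 ≤ t) :
    NN (s • u + t • w) := by
  unfold NN at *
  simp only [Prod.fst_add, Prod.snd_add, Prod.smul_fst, Prod.smul_snd, smul_eq_mul]
  rcases hs.eq_or_lt with rfl | hs <;> rcases ht.eq_or_lt with rfl | ht
  · right; simp
  · rcases hw with h | ⟨h, h'⟩
    · left; simp; positivity
    · right; simp [h]; positivity
  · rcases hu with h | ⟨h, h'⟩
    · left; simp; positivity
    · right; simp [h]; positivity
  · rcases hu with h | ⟨h, h'⟩ <;> rcases hw with g | ⟨g, g'⟩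
    · left; positivity
    · left; rw [g]; simp; positivity
    · left; rw [h]; simp; positivity
    · right; rw [h, g]; simp; positivity

lemma ps_smul_iff (u : ℝ × ℝ) (s : ℝ) (hs : 0 < s) : Ps (s • u) ↔ Ps u := by
  unfold Ps
  simp only [Prod.smul_fst, Prod.smul_snd, smul_eq_mul]
  simp [hs, hs.ne']

lemma nn_of_smul (u : ℝ × ℝ) (s : ℝ) (hs : 0 < s) (h : NN (s • u)) : NN u := by
  unfold NN at *
  simpa [hs, hs.ne'] using h

lemma ps_par (u w : ℝ × ℝ) (hu : Ps u) (hw : Ps w) (h : det u w = 0) :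
    ∃ t : ℝ, 0 < t ∧ w = t • u := by
  unfold Ps det at *
  rcases hu with hu | ⟨hu, hu'⟩ <;> rcases hw with hw | ⟨hw, hw'⟩
  · refine ⟨w.2 / u.2, by positivity, Prod.ext ?_ ?_⟩
    · simp; field_simp; linarith
    · simp; field_simp
  · rw [hw] at h; nlinarith
  · rw [hu] at h; nlinarith
  · refine ⟨w.1 / u.1, by positivity, Prod.ext ?_ ?_⟩
    · simp; field_simp
    · simp [hu, hw]

/-- angle order -/
def AL (u w : ℝ × ℝ) : Prop := (Ps u ∧ ¬ Ps w) ∨ ((Ps u ↔ Ps w) ∧ 0 ≤ det u w)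

lemma caseA (P P' R R' : ℝ × ℝ) (hP' : NN P') (hR : NN R)
    (h1 : 0 ≤ det P P') (h2 : 0 ≤ det P R) (h3 : 0 ≤ det P R') (h5 : 0 ≤ det P' R')
    (h6 : 0 ≤ det R R')
    (h8 : 0 ≤ T P P' R') (h9 : 0 ≤ T P R R')
    (he : Ps (P - P')) (he' : Ps (R' - R)) :
    Ps P ∧ ∀ Z : ℝ × ℝ, ((0 ≤ T P P' Z ∧ 0 ≤ det P Z) ∨ (0 ≤ T Z R R' ∧ 0 ≤ det Z R')) →
      det P Z = 0 := by
  have pP : Ps P := by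
    by_contra hc
    unfold Ps NN at *
    simp at *
    rcases he with h | h <;> rcases hP' with h' | h' <;> grind
  have pR' : Ps R' := by
    by_contra hc
    unfold Ps NN at *
    simp at *
    rcases he' with h | h <;> rcases hR with h' | h' <;> grind
  refine ⟨pP, ?_⟩
  have hD : det P R' = 0 := by
    by_contra hne
    have hD : 0 < det P R' := lt_of_le_of_ne h3 (Ne.symm hne)
    rcases nn_total (R' - P) with h | h
    · have := nn_comb P (R' - P) (det P' R' + det P P' - det P R') (det P P') (ps_nn _ pP) h
        (by unfold T det at *; simp at *; linarith) h1
      have e : (det P' R' + det P P' - det P R') • P + det P P' • (R' - P)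
          = det P R' • (P' - P) := by
        ext <;> simp [det] <;> ring
      rw [e] at this
      exact nn_not _ (nn_of_smul _ _ hD this) (by simpa using he)
    · have := nn_comb R' (P - R') (det R R' + det P R - det P R') (det R R') (ps_nn _ pR')
        (by simpa using ps_nn _ h)
        (by unfold T det at *; simp at *; linarith) h6
      have e : (det R R' + det P R - det P R') • R' + det R R' • (P - R')
          = det P R' • (R - R') := by
        ext <;> simp [det] <;> ring
      rw [e] at this
      exact nn_not _ (nn_of_smul _ _ hD this) (by simpa using he')
  obtain ⟨t, ht, rfl⟩ := ps_par P R' pP pR' hD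
  have hPP' : det P P' = 0 := by
    have : det P' (t • P) = - (t * det P P') := by simp [det]; ring
    nlinarith
  have hPR : det P R = 0 := by
    have : det R (t • P) = - (t * det P R) := by simp [det]; ring
    nlinarith
  obtain ⟨s, hs, hse⟩ := ps_par P (P - P') pP he (by unfold det at *; simp; linarith)
  obtain ⟨u, hu, hue⟩ := ps_par P (t • P - R) pP he' (by unfold det at *; simp; linarith)
  intro Z hZ
  have eP' : P' = P - s • P := by rw [← hse]; simp
  have eR : R = t • P - u • P := by rw [← hue]; simp
  rcases hZ with ⟨a, b⟩ | ⟨a, b⟩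
  · have : T P P' Z = - (s * det P Z) := by rw [eP']; simp [T, det]; ring
    nlinarith
  · have e1 : T Z R (t • P) = u * det P Z := by rw [eR]; simp [T, det]; ring
    have e2 : det Z (t • P) = - (t * det P Z) := by simp [det]; ring
    have : 0 ≤ det P Z := by by_contra hc; push Not at hc; nlinarith
    nlinarith

set_option maxHeartbeats 1000000 in
lemma caseB (P P' R R' : ℝ × ℝ) (hP' : NN P') (hR : NN R)
    (h1 : 0 ≤ det P P') (h2 : 0 ≤ det P R) (h5 : 0 ≤ det P' R')
    (h6 : 0 ≤ det R R')
    (h7 : 0 ≤ T P P' R) (h8 : 0 ≤ T P P' R') (h9 : 0 ≤ T P R R') (h10 : 0 ≤ T P' R R')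
    (he : (Ps (P' - P) ∧ Ps (R' - R)) ∨ (Ps (P - P') ∧ Ps (R - R'))) :
    0 ≤ det (P' - P) (R' - R) := by
  by_contra hc
  push Not at hc
  set e := P' - P with hedef
  set e' := R' - R with hedef'
  obtain ⟨D, hD⟩ : ∃ D, D = det e' e := ⟨_, rfl⟩
  have hDn : det e e' = - D := by rw [hD]; simp [det]; ring
  have hDp : 0 < D := by linarith
  -- R = X e + Y e'
  obtain ⟨X, hX⟩ : ∃ X, X = - det R e' / D := ⟨_, rfl⟩
  obtain ⟨Y, hY⟩ : ∃ Y, Y = det R e / D := ⟨_, rfl⟩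
  obtain ⟨x, hx⟩ : ∃ x, x = - det (R - P) e' / D := ⟨_, rfl⟩
  obtain ⟨y, hy⟩ : ∃ y, y = det (R - P) e / D := ⟨_, rfl⟩
  have key : ∀ V : ℝ × ℝ, V = (- det V e' / D) • e + (det V e / D) • e' := by
    intro V
    ext
    · simp only [Prod.fst_add, Prod.smul_fst, smul_eq_mul]
      field_simp
      rw [hD]; simp only [det]; ring
    · simp only [Prod.snd_add, Prod.smul_snd, smul_eq_mul]
      field_simp
      rw [hD]; simp only [det]; ring
  have eR : R = X • e + Y • e' := by rw [hX, hY]; exact key R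
  have eRP : R - P = x • e + y • e' := by rw [hx, hy]; exact key (R - P)
  have eP : P = (X - x) • e + (Y - y) • e' := by
    have : P = R - (R - P) := by simp
    rw [this, eRP, eR]; module
  have eP' : P' = (X - x + 1) • e + (Y - y) • e' := by
    have : P' = P + e := by simp [hedef]
    rw [this, eP]; module
  have eR' : R' = X • e + (Y + 1) • e' := by
    have : R' = R + e' := by simp [hedef']
    rw [this, eR]; module
  have dd : ∀ p q r s : ℝ, det (p • e + q • e') (r • e + s • e') = - D * (p * s - q * r) := by
    intro p q r s; rw [hD]; simp [det]; ring
  have tt : ∀ p q r s a b : ℝ, T (p • e + q • e') (r • e + s • e') (a • e + b • e')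
      = - D * ((r - p) * (b - q) - (s - q) * (a - p)) := by
    intro p q r s a b; rw [hD]; simp [T, det]; ring
  clear_value e e'
  have neg : ∀ z : ℝ, 0 ≤ - D * z → z ≤ 0 := by
    intro z hz; by_contra hc; push Not at hc; nlinarith
  rw [eP, eP', dd] at h1
  rw [eP, eR, dd] at h2
  rw [eP', eR', dd] at h5
  rw [eR, eR', dd] at h6
  rw [eP, eP', eR, tt] at h7
  rw [eP, eP', eR', tt] at h8
  rw [eP, eR, eR', tt] at h9
  rw [eP', eR, eR', tt] at h10
  replace h1 := neg _ h1
  replace h2 := neg _ h2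
  replace h5 := neg _ h5
  replace h6 := neg _ h6
  replace h7 := neg _ h7
  replace h8 := neg _ h8
  replace h9 := neg _ h9
  replace h10 := neg _ h10
  have hx0 : x ≤ 0 := by nlinarith
  have hy1 : y ≤ -1 := by nlinarith
  have hX0 : X ≤ 0 := by nlinarith
  have hYy : y ≤ Y := by nlinarith
  rcases he with ⟨he, he'⟩ | ⟨he, he'⟩
  · have hY0 : Y ≤ 0 := by
      by_contra hc; push Not at hc
      have : 0 ≤ X * y := by nlinarith
      have : 0 ≤ (-x) * Y := by nlinarith
      nlinarith
    have hneg := nn_comb e e' (-X) (-Y) (ps_nn _ he) (ps_nn _ he') (by linarith) (by linarith)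
    have : (-X) • e + (-Y) • e' = - R := by rw [eR]; module
    rw [this] at hneg
    have hR0 : R = 0 := nn_antisymm R hR hneg
    have hXz : X = 0 := by rw [hX, hR0]; simp [det]
    have hYz : Y = 0 := by rw [hY, hR0]; simp [det]
    rw [hXz, hYz] at h5
    linarith
  · have hXx : X - x + 1 ≤ 0 := by
      by_contra hc
      push Not at hc
      have hw : Ps (-e) := by rw [hedef]; simpa using he
      have hw' : Ps (-e') := by rw [hedef']; simpa using he'
      have hneg := nn_comb (-e) (-e') (X - x + 1) (Y - y) (ps_nn _ hw) (ps_nn _ hw') (by linarith) (by linarith)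
      have e2 : (X - x + 1) • (-e) + (Y - y) • (-e') = - P' := by rw [eP']; module
      rw [e2] at hneg
      have hP0 : P' = 0 := nn_antisymm P' hP' hneg
      have : det P' e' = - D * (X - x + 1) := by
        have := dd (X - x + 1) (Y - y) 0 1
        rw [← eP'] at this; simp at this; simp [this]
      rw [hP0] at this
      simp [det] at this
      rcases this with h | h <;> linarith
    clear eP eP' eR eR' eRP key dd tt hX hY hx hy hP' hR he he' hedef hedef' hD hDn hc neg
    have hxY : (-x) * Y ≤ -(y * X) := by linarith
    have a1 : (-x) * y ≤ (-x) * Y := mul_le_mul_of_nonneg_left hYy (by linarith)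
    have a2 : 0 ≤ (-y) * (-(X - x + 1)) := mul_nonneg (by linarith) (by linarith)
    linarith

end S3

namespace S3

def vec (f : LinFun) : ℝ × ℝ := (f.b, 1 - f.a)

lemma vec_ne {f : LinFun} (h : ¬ f.IsId) : vec f ≠ 0 := by
  intro hv
  apply h
  have h1 : f.b = 0 := congrArg Prod.fst hv
  have h2 : 1 - f.a = 0 := congrArg Prod.snd hv
  cases f
  simp [LinFun.IsId, LinFun.idf] at *
  constructor <;> linarith

lemma isId_of_vec {f : LinFun} (h : vec f = 0) : f.IsId := by
  by_contra hc; exact vec_ne hc h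

lemma theta_spec (f : LinFun) (h : vec f ≠ 0) :
    0 ≤ f.theta ∧ f.theta < 2 * Real.pi ∧ ∃ r : ℝ, 0 < r ∧ f.b = r * Real.cos f.theta ∧
      1 - f.a = r * Real.sin f.theta := by
  have hz : (⟨f.b, 1 - f.a⟩ : ℂ) ≠ 0 := by
    intro hz
    apply h
    have h1 := congrArg Complex.re hz
    have h2 := congrArg Complex.im hz
    exact Prod.ext h1 h2
  set z : ℂ := ⟨f.b, 1 - f.a⟩ with hzd
  have hp := Real.pi_pos
  have a1 := Complex.neg_pi_lt_arg z
  have a2 := Complex.arg_le_pi z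
  have c1 : ‖z‖ * Real.cos z.arg = z.re := Complex.norm_mul_cos_arg z
  have c2 : ‖z‖ * Real.sin z.arg = z.im := Complex.norm_mul_sin_arg z
  have hn : 0 < ‖z‖ := norm_pos_iff.mpr hz
  unfold LinFun.theta
  rw [← hzd]
  split_ifs with h0
  · exact ⟨h0, by linarith, ‖z‖, hn, c1.symm, c2.symm⟩
  · push Not at h0
    refine ⟨by linarith, by linarith, ‖z‖, hn, ?_, ?_⟩
    · rw [Real.cos_add_two_pi]; exact c1.symm
    · rw [Real.sin_add_two_pi]; exact c2.symm

lemma ps_theta (f : LinFun) (h : vec f ≠ 0) : Ps (vec f) ↔ f.theta < Real.pi := by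
  obtain ⟨h0, h1, r, hr, hb, ha⟩ := theta_spec f h
  have hp := Real.pi_pos
  unfold Ps vec
  simp only [hb, ha]
  constructor
  · intro hh
    by_contra hc
    push Not at hc
    have hs : Real.sin f.theta ≤ 0 := by
      have := Real.sin_nonneg_of_nonneg_of_le_pi (x := f.theta - Real.pi) (by linarith) (by linarith)
      rw [Real.sin_sub_pi] at this; linarith
    rcases hh with hh | ⟨hh, hh'⟩
    · nlinarith
    · rcases hc.eq_or_lt with hc | hc
      · rw [← hc, Real.cos_pi] at hh'; linarith
      · have := Real.sin_pos_of_pos_of_lt_pi (x := f.theta - Real.pi) (by linarith) (by linarith)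
        rw [Real.sin_sub_pi] at this
        nlinarith
  · intro hh
    rcases h0.eq_or_lt with h0 | h0
    · right; rw [← h0]; simp [hr]
    · left
      have := Real.sin_pos_of_pos_of_lt_pi h0 hh
      positivity

lemma det_theta (f g : LinFun) (hf : vec f ≠ 0) (hg : vec g ≠ 0) :
    ∃ s : ℝ, 0 < s ∧ det (vec f) (vec g) = s * Real.sin (g.theta - f.theta) := by
  obtain ⟨-, -, r, hr, hb, ha⟩ := theta_spec f hf
  obtain ⟨-, -, r', hr', hb', ha'⟩ := theta_spec g hg
  refine ⟨r * r', by positivity, ?_⟩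
  unfold det vec
  simp only [hb, ha, hb', ha', Real.sin_sub]
  ring

lemma theta_le (f g : LinFun) (hf : vec f ≠ 0) (hg : vec g ≠ 0) (h : AL (vec f) (vec g)) :
    f.theta ≤ g.theta := by
  rcases h with ⟨h, h'⟩ | ⟨h, h'⟩
  · rw [ps_theta f hf] at h; rw [ps_theta g hg] at h'; linarith
  · rw [ps_theta f hf, ps_theta g hg] at h
    obtain ⟨f0, f1, -⟩ := theta_spec f hf
    obtain ⟨g0, g1, -⟩ := theta_spec g hg
    obtain ⟨s, hs, e⟩ := det_theta f g hf hg
    by_contra hc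
    push Not at hc
    have hd : f.theta - g.theta < Real.pi := by
      by_cases hh : f.theta < Real.pi
      · linarith
      · have : ¬ g.theta < Real.pi := fun x => hh (h.2 x)
        linarith
    have := Real.sin_pos_of_pos_of_lt_pi (x := f.theta - g.theta) (by linarith) hd
    have e2 : Real.sin (g.theta - f.theta) = - Real.sin (f.theta - g.theta) := by
      rw [← Real.sin_neg]; congr 1; ring
    rw [e2] at e
    nlinarith

lemma colinear_of {n : ℕ} (f : Fin n → LinFun) (d : ℝ × ℝ) (hd : d ≠ 0)
    (h : ∀ i, det d (vec (f i)) = 0) : Colinear f := by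
  let g : LinFun := ⟨1 - d.2, d.1⟩
  have hg : vec g = d := by ext <;> simp [vec, g]
  refine ⟨g.theta, fun i => ?_⟩
  by_cases hi : (f i).IsId
  · left; exact hi
  right
  obtain ⟨s, hs, e⟩ := det_theta g (f i) (by rw [hg]; exact hd) (vec_ne hi)
  rw [hg, h i] at e
  have : Real.sin ((f i).theta - g.theta) = 0 := by
    rcases mul_eq_zero.mp e.symm with h | h
    · linarith
    · exact h
  obtain ⟨k, hk⟩ := Real.sin_eq_zero_iff.mp this
  rcases Int.even_or_odd' k with ⟨m, rfl | rfl⟩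
  · left; refine ⟨m, ?_⟩; rw [← hk]; push_cast; ring
  · right; refine ⟨m, ?_⟩
    have : (f i).theta - (g.theta + Real.pi) = ((f i).theta - g.theta) - Real.pi := by ring
    rw [this, ← hk]; push_cast; ring

/-- lists -/
lemma foldl_comp (L : List LinFun) (g : LinFun) :
    L.foldl (fun acc g => g.comp acc) g = (compList L).comp g := by
  induction L generalizing g with
  | nil => simp [compList, LinFun.comp, LinFun.idf]
  | cons x L ih =>
    simp only [compList, List.foldl_cons]
    rw [ih, ih (x.comp LinFun.idf)]
    simp [LinFun.comp, LinFun.idf]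
    constructor <;> ring

lemma compList_append (A B : List LinFun) :
    compList (A ++ B) = (compList B).comp (compList A) := by
  rw [← foldl_comp]; simp [compList]

lemma compList_cons (x : LinFun) (B : List LinFun) :
    compList (x :: B) = (compList B).comp x := by
  rw [← foldl_comp]; simp [compList, LinFun.comp, LinFun.idf]

lemma compList_nil : compList [] = LinFun.idf := rfl

lemma compList_pos (L : List LinFun) (h : ∀ x ∈ L, 0 < x.a) : 0 < (compList L).a := by
  induction L with
  | nil => simp [compList_nil, LinFun.idf]
  | cons x L ih =>
    rw [compList_cons]
    simp only [LinFun.comp]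
    exact mul_pos (ih fun y hy => h y (by simp [hy])) (h x (by simp))

lemma comp_assoc (f g h : LinFun) : (f.comp g).comp h = f.comp (g.comp h) := by
  simp [LinFun.comp]; constructor <;> ring

def rel (x y : LinFun) : Prop := x.IsId ∨ y.IsId ∨ x.theta ≤ y.theta

lemma rel_comm (x y : LinFun) (h : rel x y) (h' : rel y x) : x.comp y = y.comp x := by
  by_cases hx : x.IsId
  · rw [show x = LinFun.idf from hx]; simp [LinFun.comp, LinFun.idf]
  by_cases hy : y.IsId
  · rw [show y = LinFun.idf from hy]; simp [LinFun.comp, LinFun.idf]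
  have e : x.theta = y.theta := by
    unfold rel at *
    apply le_antisymm <;> tauto
  obtain ⟨s, hs, e'⟩ := det_theta x y (vec_ne hx) (vec_ne hy)
  rw [e] at e'
  simp [det, vec] at e'
  simp only [LinFun.comp, LinFun.mk.injEq]
  constructor <;> linarith

lemma compList_comm (x : LinFun) (A : List LinFun) (h : ∀ y ∈ A, x.comp y = y.comp x) :
    x.comp (compList A) = (compList A).comp x := by
  induction A with
  | nil => simp [compList_nil, LinFun.comp, LinFun.idf]
  | cons y A ih =>
    rw [compList_cons, ← comp_assoc, ih fun z hz => h z (by simp [hz]), comp_assoc,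
      h y (by simp), comp_assoc]

lemma sorted_unique (L : List LinFun) : ∀ M : List LinFun, L.Perm M → L.Pairwise rel →
    M.Pairwise rel → compList L = compList M := by
  induction L with
  | nil => intro M h _ _; rw [List.nil_perm.mp h]
  | cons x L ih =>
    intro M h hL hM
    have hx : x ∈ M := h.subset (by simp)
    obtain ⟨A, B, rfl⟩ := List.append_of_mem hx
    have hp : L.Perm (A ++ B) :=
      (List.perm_cons x).mp (h.trans List.perm_middle)
    rw [List.pairwise_cons] at hL
    rw [List.pairwise_append] at hM
    obtain ⟨hA, hB, hAB⟩ := hM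
    rw [List.pairwise_cons] at hB
    have := ih (A ++ B) hp hL.2 (by
      rw [List.pairwise_append]
      exact ⟨hA, hB.2, fun a ha b hb => hAB a ha b (by simp [hb])⟩)
    rw [compList_cons, this, compList_append, compList_append, compList_cons, comp_assoc,
      comp_assoc]
    congr 1
    symm
    apply compList_comm
    intro y hy
    apply rel_comm
    · apply hL.1; apply hp.symm.subset; simp [hy]
    · exact hAB y hy x (by simp)

lemma id_rot (A B : List LinFun) (hA : ∀ x ∈ A, 0 < x.a) 
    (h : (compList (A ++ B)).IsId) : (compList (B ++ A)).IsId := by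
  rw [compList_append] at *
  have := compList_pos A hA
  simp only [LinFun.IsId, LinFun.comp, LinFun.idf, LinFun.mk.injEq] at *
  obtain ⟨h1, h2⟩ := h
  refine ⟨by linarith, ?_⟩
  linear_combination (compList A).a * h2 - (compList A).b * h1

def CcwL (L : List LinFun) : Prop := ∃ c, (L.drop c ++ L.take c).Pairwise rel

lemma ccw_iff {n : ℕ} (f : Fin n → LinFun) (σ : Equiv.Perm (Fin n)) :
    Counterclockwise f σ ↔ CcwL (permList f σ) := by
  unfold Counterclockwise CcwL permList
  refine exists_congr fun c => ?_
  rw [List.pairwise_append, List.pairwise_iff_getElem, List.pairwise_iff_getElem]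
  simp only [List.getElem_drop, List.getElem_take, List.getElem_ofFn, List.length_drop,
    List.length_take, List.length_ofFn]
  have key : ∀ i j : Fin n, (¬ (f (σ i)).IsId → ¬ (f (σ j)).IsId →
    (f (σ i)).theta ≤ (f (σ j)).theta) ↔ rel (f (σ i)) (f (σ j)) := by
    intro i j; unfold rel; tauto
  constructor
  · intro h
    have h' : ∀ i j : Fin n,
      ((c ≤ i.val ∧ i ≤ j) ∨ (i ≤ j ∧ j.val < c) ∨ (c ≤ i.val ∧ j.val < c)) →
      rel (f (σ i)) (f (σ j)) := fun i j hij => (key i j).1 fun a b => h i j a b hij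
    refine ⟨?_, ?_, ?_⟩
    · intro i j hi hj hij
      apply h'; left; simp; omega
    · intro i j hi hj hij
      apply h'; right; left; simp; omega
    · intro x hx y hy
      obtain ⟨i, hi, rfl⟩ := List.mem_iff_getElem.mp hx
      obtain ⟨j, hj, rfl⟩ := List.mem_iff_getElem.mp hy
      simp only [List.getElem_drop, List.getElem_take, List.getElem_ofFn]
      simp at hi hj
      apply h'; right; right; simp; omega
  · rintro ⟨h1, h2, h3⟩ i j hi hj hij
    by_cases he : i = j
    · rw [he]
    have hne : i.val ≠ j.val := fun h => he (Fin.ext h)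
    refine (key i j).2 ?_ hi hj
    simp only [Fin.le_def] at hij
    rcases hij with hij | hij | hij
    · have := h1 (i.val - c) (j.val - c) (by omega) (by omega) (by omega)
      simpa [show c + (i.val - c) = i.val by omega, show c + (j.val - c) = j.val by omega] using this
    · exact h2 i.val j.val (by omega) (by omega) (by omega)
    · apply h3
      · refine List.mem_iff_getElem.mpr ⟨i.val - c, by simp; omega, ?_⟩
        simp [show c + (i.val - c) = i.val by omega]
      · refine List.mem_iff_getElem.mpr ⟨j.val, by simp; omega, ?_⟩
        simp

lemma perm_map_lift {α β : Type*} (g : α → β) {L M : List β} (h : L.Perm M) :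
    ∀ l : List α, L = l.map g → ∃ l' : List α, l'.Perm l ∧ M = l'.map g := by
  induction h with
  | nil => intro l hl; exact ⟨[], by simpa using hl.symm, rfl⟩
  | cons x _ ih =>
    intro l hl
    cases l with
    | nil => simp at hl
    | cons a l =>
      simp at hl
      obtain ⟨l', h1, h2⟩ := ih l hl.2
      exact ⟨a :: l', h1.cons a, by simp [hl.1, h2]⟩
  | swap x y L =>
    intro l hl
    match l, hl with
    | a :: b :: l, hl =>
      simp at hl
      exact ⟨b :: a :: l, List.Perm.swap _ _ _, by simp [hl]⟩
  | trans _ _ ih1 ih2 =>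
    intro l hl
    obtain ⟨l1, p1, e1⟩ := ih1 l hl
    obtain ⟨l2, p2, e2⟩ := ih2 l1 e1
    exact ⟨l2, p2.trans p1, e2⟩

lemma exists_perm {n : ℕ} (f : Fin n → LinFun) (σ : Equiv.Perm (Fin n)) (M : List LinFun)
    (h : (permList f σ).Perm M) : ∃ ρ, permList f ρ = M := by
  obtain ⟨l, hl, rfl⟩ := perm_map_lift f h (List.ofFn σ) (by
    unfold permList; rw [List.map_ofFn]; rfl)
  have hlen : l.length = n := by rw [hl.length_eq]; simp
  have hnd : l.Nodup := by
    rw [hl.nodup_iff]; exact List.nodup_ofFn_ofInjective σ.injective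
  let τ : Fin n → Fin n := fun i => l[i.val]'(by omega)
  have hτ : Function.Injective τ := by
    intro i j hij
    apply Fin.ext
    exact (List.Nodup.getElem_inj_iff hnd).mp hij
  refine ⟨Equiv.ofBijective τ (Finite.injective_iff_bijective.mp hτ), ?_⟩
  apply List.ext_getElem
  · simp [permList, hlen]
  · intro i h1 h2
    simp [permList, τ]

lemma permList_perm {n : ℕ} (f : Fin n → LinFun) (σ ρ : Equiv.Perm (Fin n)) :
    (permList f σ).Perm (permList f ρ) :=
  (Equiv.Perm.ofFn_comp_perm σ f).trans (Equiv.Perm.ofFn_comp_perm ρ f).symm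

end S3

namespace S3

noncomputable def wv (g : LinFun) : ℝ × ℝ := (g.b / g.a, (1 - g.a) / g.a)

noncomputable def W (L : List LinFun) (k : ℕ) : ℝ × ℝ := wv (compList (L.take k))

lemma wv_comp (h g : LinFun) (hh : 0 < h.a) (hg : 0 < g.a) :
    wv (h.comp g) - wv g = (1 / (h.a * g.a)) • vec h := by
  ext
  · simp [wv, LinFun.comp, vec]; field_simp; ring
  · simp [wv, LinFun.comp, vec]; field_simp; ring

lemma W_edge (L : List LinFun) (hL : ∀ x ∈ L, 0 < x.a) (k : ℕ) (hk : k < L.length) :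
    ∃ t : ℝ, 0 < t ∧ W L (k + 1) - W L k = t • vec L[k] := by
  have h1 : 0 < (L[k]).a := hL _ (by simp)
  have h2 : 0 < (compList (L.take k)).a := compList_pos _ fun x hx => hL x (List.mem_of_mem_take hx)
  refine ⟨1 / ((L[k]).a * (compList (L.take k)).a), by positivity, ?_⟩
  rw [← wv_comp _ _ h1 h2]
  unfold W
  rw [List.take_succ_eq_append_getElem hk, compList_append]
  simp [compList_cons, compList_nil, LinFun.comp, LinFun.idf]

lemma W_triple (L : List LinFun) (hL : ∀ x ∈ L, 0 < x.a)
    (hmin : ∀ M, L.Perm M → (compList L).b ≤ (compList M).b) (i j k : ℕ) (hij : i ≤ j)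
    (hjk : j ≤ k) : 0 ≤ T (W L i) (W L j) (W L k) := by
  obtain ⟨p, rfl⟩ := Nat.exists_eq_add_of_le hij
  obtain ⟨q, rfl⟩ := Nat.exists_eq_add_of_le hjk
  obtain ⟨A, hA⟩ : ∃ A, A = L.take i := ⟨_, rfl⟩
  obtain ⟨B, hB⟩ : ∃ B, B = (L.drop i).take p := ⟨_, rfl⟩
  obtain ⟨C, hC⟩ : ∃ C, C = (L.drop (i + p)).take q := ⟨_, rfl⟩
  obtain ⟨D, hD⟩ : ∃ D, D = L.drop (i + p + q) := ⟨_, rfl⟩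
  have e1 : L.take (i + p) = A ++ B := by rw [hA, hB, List.take_add]
  have e2 : L.take (i + p + q) = A ++ B ++ C := by rw [List.take_add, e1, hC]
  have e3 : L = A ++ B ++ C ++ D := by rw [← e2, hD, List.take_append_drop]
  have mA : 0 < (compList A).a := compList_pos _ fun x hx => hL x (by rw [e3]; simp [hx])
  have mB : 0 < (compList B).a := compList_pos _ fun x hx => hL x (by rw [e3]; simp [hx])
  have mC : 0 < (compList C).a := compList_pos _ fun x hx => hL x (by rw [e3]; simp [hx])
  have mD : 0 < (compList D).a := compList_pos _ fun x hx => hL x (by rw [e3]; simp [hx])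
  have hsw := hmin (A ++ C ++ B ++ D) (by
    rw [e3]
    apply List.Perm.append_right
    rw [List.append_assoc, List.append_assoc]
    exact List.Perm.append_left _ List.perm_append_comm)
  rw [e3] at hsw
  unfold W
  rw [e1, e2, ← hA]
  clear e1 e2 e3 hA hB hC hD hmin
  simp only [compList_append] at *
  set a := compList A
  set b := compList B
  set c := compList C
  set d := compList D
  have hdet : 0 ≤ det (vec b) (vec c) := by
    simp only [LinFun.comp] at hsw
    have : 0 ≤ d.a * det (vec b) (vec c) := by
      simp only [det, vec]
      nlinarith
    exact nonneg_of_mul_nonneg_right this mD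
  have f1 := wv_comp b a mB mA
  have f2 := wv_comp c (b.comp a) mC (by simp only [LinFun.comp]; positivity)
  have : T (wv a) (wv (b.comp a)) (wv (c.comp (b.comp a)))
     = det (wv (b.comp a) - wv a) (wv (c.comp (b.comp a)) - wv (b.comp a)) := by
    simp [T, det]; ring
  rw [this, f1, f2]
  have : det ((1 / (b.a * a.a)) • vec b) ((1 / (c.a * (b.comp a).a)) • vec c)
     = (1 / (b.a * a.a)) * (1 / (c.a * (b.a * a.a))) * det (vec b) (vec c) := by
    simp [det, LinFun.comp]; ring
  rw [this]
  positivity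

lemma poly (Q : ℕ → ℝ × ℝ) (N : ℕ)
    (hT : ∀ a b c, a ≤ b → b ≤ c → c ≤ N → 0 ≤ T (Q a) (Q b) (Q c))
    (hN : ∀ k, k ≤ N → NN (Q k - Q 0)) (i j : ℕ) (hij : i < j) (hj : j < N)
    (hi0 : Q (i + 1) - Q i ≠ 0) (hj0 : Q (j + 1) - Q j ≠ 0) :
    AL (Q (i + 1) - Q i) (Q (j + 1) - Q j) ∨
      ∃ d : ℝ × ℝ, d ≠ 0 ∧ ∀ k, k ≤ N → det d (Q k - Q 0) = 0 := by
  have hD : ∀ a b, a ≤ b → b ≤ N → 0 ≤ det (Q a - Q 0) (Q b - Q 0) := fun a b h1 h2 =>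
    hT 0 a b (by omega) h1 h2
  have hTT : ∀ a b c : ℕ, T (Q a - Q 0) (Q b - Q 0) (Q c - Q 0) = T (Q a) (Q b) (Q c) := by
    intro a b c; simp [T]
  have hT' : ∀ a b c, a ≤ b → b ≤ c → c ≤ N → 0 ≤ T (Q a - Q 0) (Q b - Q 0) (Q c - Q 0) := by
    intro a b c h1 h2 h3; rw [hTT]; exact hT a b c h1 h2 h3
  have ee : ∀ a b : ℕ, (Q a - Q 0) - (Q b - Q 0) = Q a - Q b := by intro a b; simp
  by_cases p1 : Ps (Q (i + 1) - Q i) <;> by_cases p2 : Ps (Q (j + 1) - Q j)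
  · left; right
    refine ⟨iff_of_true p1 p2, ?_⟩
    have := caseB (Q i - Q 0) (Q (i + 1) - Q 0) (Q j - Q 0) (Q (j + 1) - Q 0)
      (hN _ (by omega)) (hN _ (by omega)) (hD _ _ (by omega) (by omega)) (hD _ _ (by omega) (by omega))
      (hD _ _ (by omega) (by omega)) (hD _ _ (by omega) (by omega))
      (hT' _ _ _ (by omega) (by omega) (by omega)) (hT' _ _ _ (by omega) (by omega) (by omega))
      (hT' _ _ _ (by omega) (by omega) (by omega)) (hT' _ _ _ (by omega) (by omega) (by omega))
      (by left; rw [ee, ee]; exact ⟨p1, p2⟩)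
    rwa [ee, ee] at this
  · left; left; exact ⟨p1, p2⟩
  · right
    have q1 := ps_of_not p1 hi0
    rw [neg_sub] at q1
    obtain ⟨h1, h2⟩ := caseA (Q i - Q 0) (Q (i + 1) - Q 0) (Q j - Q 0) (Q (j + 1) - Q 0)
      (hN _ (by omega)) (hN _ (by omega)) (hD _ _ (by omega) (by omega)) (hD _ _ (by omega) (by omega))
      (hD _ _ (by omega) (by omega)) (hD _ _ (by omega) (by omega)) (hD _ _ (by omega) (by omega))
      (hT' _ _ _ (by omega) (by omega) (by omega)) (hT' _ _ _ (by omega) (by omega) (by omega))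
      (by rw [ee]; exact q1) (by rw [ee]; exact p2)
    refine ⟨_, ?_, fun k hk => h2 (Q k - Q 0) ?_⟩
    · intro h0; rw [h0] at h1; simp [Ps] at h1
    · by_cases hki : i + 1 ≤ k
      · left
        exact ⟨hT' _ _ _ (by omega) (by omega) (by omega), hD _ _ (by omega) (by omega)⟩
      · right
        exact ⟨hT' _ _ _ (by omega) (by omega) (by omega), hD _ _ (by omega) (by omega)⟩
  · left; right
    refine ⟨iff_of_false p1 p2, ?_⟩
    have q1 := ps_of_not p1 hi0
    have q2 := ps_of_not p2 hj0
    rw [neg_sub] at q1 q2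
    have := caseB (Q i - Q 0) (Q (i + 1) - Q 0) (Q j - Q 0) (Q (j + 1) - Q 0)
      (hN _ (by omega)) (hN _ (by omega)) (hD _ _ (by omega) (by omega)) (hD _ _ (by omega) (by omega))
      (hD _ _ (by omega) (by omega)) (hD _ _ (by omega) (by omega))
      (hT' _ _ _ (by omega) (by omega) (by omega)) (hT' _ _ _ (by omega) (by omega) (by omega))
      (hT' _ _ _ (by omega) (by omega) (by omega)) (hT' _ _ _ (by omega) (by omega) (by omega))
      (by right; rw [ee, ee]; exact ⟨q1, q2⟩)
    rwa [ee, ee] at this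

lemma exists_min (w : ℕ → ℝ × ℝ) (n : ℕ) : ∃ s ≤ n, ∀ k ≤ n, NN (w k - w s) := by
  induction n with
  | zero => exact ⟨0, le_rfl, fun k hk => by simp [Nat.le_zero.mp hk, NN]⟩
  | succ n ih =>
    obtain ⟨s, hs, h⟩ := ih
    rcases nn_total (w (n + 1) - w s) with h1 | h1
    · refine ⟨s, by omega, fun k hk => ?_⟩
      rcases Nat.lt_or_ge n k with h2 | h2
      · rw [show k = n + 1 by omega]; exact h1
      · exact h k h2
    · refine ⟨n + 1, le_rfl, fun k hk => ?_⟩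
      rcases Nat.lt_or_ge n k with h2 | h2
      · rw [show k = n + 1 by omega]; simp [NN]
      · have := nn_comb _ _ 1 1 (h k h2) (ps_nn _ h1) zero_le_one zero_le_one
        simpa using this

lemma T_cyc (p q r : ℝ × ℝ) : T q r p = T p q r := by simp [T, det]; ring

lemma det_smul_smul (u w : ℝ × ℝ) (s t : ℝ) : det (s • u) (t • w) = s * t * det u w := by
  simp [det]; ring

lemma AL_smul (u w : ℝ × ℝ) (s t : ℝ) (hs : 0 < s) (ht : 0 < t) (h : AL (s • u) (t • w)) :
    AL u w := by
  unfold AL at *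
  rw [ps_smul_iff _ _ hs, ps_smul_iff _ _ ht, det_smul_smul] at h
  rcases h with h | ⟨h, h'⟩
  · left; exact h
  · right; exact ⟨h, nonneg_of_mul_nonneg_right h' (by positivity)⟩

lemma min_ccw {n : ℕ} (f : Fin n → LinFun) (hf : ∀ i, 0 < (f i).a)
    (hnc : ¬ Colinear f) (σ : Equiv.Perm (Fin n)) (hσ : IsMinimum f σ) :
    Counterclockwise f σ := by
  obtain ⟨L, hLdef⟩ : ∃ L, L = permList f σ := ⟨_, rfl⟩
  have hlen : L.length = n := by simp [hLdef, permList]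
  have hL : ∀ x ∈ L, 0 < x.a := by
    intro x hx
    rw [hLdef, permList, List.mem_ofFn] at hx
    obtain ⟨i, rfl⟩ := hx
    exact hf _
  have hget : ∀ i : Fin n, L[i.val]'(by omega) = f (σ i) := by
    intro i; subst hLdef; simp [permList]
  have hmin : ∀ M, L.Perm M → (compList L).b ≤ (compList M).b := by
    intro M hM
    rw [hLdef] at hM
    obtain ⟨ρ, hρ⟩ := exists_perm f σ M hM
    rw [← hρ, hLdef]; exact hσ ρ
  have hedge : ∀ i : Fin n, ∃ t : ℝ, 0 < t ∧ W L (i.val + 1) - W L i.val = t • vec (f (σ i)) := by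
    intro i; rw [← hget i]; exact W_edge L hL i.val (by omega)
  have htr := W_triple L hL hmin
  obtain ⟨s, hs, hsm⟩ := exists_min (W L) n
  obtain ⟨Q, hQ⟩ : ∃ Q : ℕ → ℝ × ℝ, Q = fun r => if s + r ≤ n then W L (s + r) else W L (s + r - (n + 1)) :=
    ⟨_, rfl⟩
  have Q1 : ∀ r, s + r ≤ n → Q r = W L (s + r) := by intro r hr; rw [hQ]; simp [hr]
  have Q2 : ∀ r, n < s + r → Q r = W L (s + r - (n + 1)) := by
    intro r hr; rw [hQ]; simp [Nat.not_le.mpr hr]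
  have Q0 : Q 0 = W L s := Q1 0 (by omega)
  have hT : ∀ a b c, a ≤ b → b ≤ c → c ≤ n + 1 → 0 ≤ T (Q a) (Q b) (Q c) := by
    intro a b c hab hbc hc
    rcases Nat.lt_or_ge n (s + a) with h1 | h1
    · rw [Q2 a h1, Q2 b (by omega), Q2 c (by omega)]
      exact htr _ _ _ (by omega) (by omega)
    rcases Nat.lt_or_ge n (s + b) with h2 | h2
    · rw [Q1 a h1, Q2 b h2, Q2 c (by omega), ← T_cyc]
      exact htr _ _ _ (by omega) (by omega)
    rcases Nat.lt_or_ge n (s + c) with h3 | h3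
    · rw [Q1 a h1, Q1 b h2, Q2 c h3, T_cyc (W L (s + c - (n + 1)))]
      exact htr _ _ _ (by omega) (by omega)
    · rw [Q1 a h1, Q1 b h2, Q1 c h3]
      exact htr _ _ _ (by omega) (by omega)
  have hN : ∀ k, k ≤ n + 1 → NN (Q k - Q 0) := by
    intro k hk
    rw [Q0]
    rcases Nat.lt_or_ge n (s + k) with h1 | h1
    · rw [Q2 k h1]; exact hsm _ (by omega)
    · rw [Q1 k h1]; exact hsm _ h1
  have main : ∀ i j, i < j → j < n + 1 → Q (i + 1) - Q i ≠ 0 → Q (j + 1) - Q j ≠ 0 →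
      AL (Q (i + 1) - Q i) (Q (j + 1) - Q j) := by
    intro i j hij hj h1 h2
    rcases poly Q (n + 1) hT hN i j hij hj h1 h2 with h | ⟨d, hd, h⟩
    · exact h
    · exfalso
      apply hnc
      have hw : ∀ k ≤ n, det d (W L k - W L s) = 0 := by
        intro k hk
        rcases Nat.lt_or_ge k s with h3 | h3
        · have := h (k + (n + 1) - s) (by omega)
          rw [Q2 _ (by omega), Q0, show s + (k + (n + 1) - s) - (n + 1) = k by omega] at this
          exact this
        · have := h (k - s) (by omega)
          rw [Q1 _ (by omega), Q0, show s + (k - s) = k by omega] at this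
          exact this
      refine colinear_of f d hd fun i => ?_
      obtain ⟨t, ht, e⟩ := hedge (σ.symm i)
      rw [Equiv.apply_symm_apply] at e
      have h3 := hw ((σ.symm i).val + 1) (by omega)
      have h4 := hw (σ.symm i).val (by omega)
      have h5 : det d (t • vec (f i)) = 0 := by
        rw [← e]; simp [det] at *; linarith
      have h6 : det d (t • vec (f i)) = t * det d (vec (f i)) := by simp [det]; ring
      rw [h6] at h5
      rcases mul_eq_zero.mp h5 with h | h
      · linarith
      · exact h
  -- rank of edge
  have hQe : ∀ i : Fin n, ∀ r, (s ≤ i.val ∧ r = i.val - s) ∨ (i.val < s ∧ r = i.val + (n + 1) - s) →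
      Q (r + 1) - Q r = W L (i.val + 1) - W L i.val := by
    rintro i r (⟨h1, rfl⟩ | ⟨h1, rfl⟩)
    · rw [Q1 _ (by omega), Q1 _ (by omega)]
      congr 2 <;> omega
    · rw [Q2 _ (by omega), Q2 _ (by omega)]
      congr 2 <;> omega
  refine ⟨s, fun i j hi hj hij => ?_⟩
  by_cases he : i = j
  · rw [he]
  have hne : i.val ≠ j.val := fun h => he (Fin.ext h)
  simp only [Fin.le_def] at hij
  obtain ⟨ri, hri⟩ : ∃ r, (s ≤ i.val ∧ r = i.val - s) ∨ (i.val < s ∧ r = i.val + (n + 1) - s) := by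
    rcases Nat.lt_or_ge i.val s with h | h
    · exact ⟨_, Or.inr ⟨h, rfl⟩⟩
    · exact ⟨_, Or.inl ⟨h, rfl⟩⟩
  obtain ⟨rj, hrj⟩ : ∃ r, (s ≤ j.val ∧ r = j.val - s) ∨ (j.val < s ∧ r = j.val + (n + 1) - s) := by
    rcases Nat.lt_or_ge j.val s with h | h
    · exact ⟨_, Or.inr ⟨h, rfl⟩⟩
    · exact ⟨_, Or.inl ⟨h, rfl⟩⟩
  obtain ⟨t, ht, et⟩ := hedge i
  obtain ⟨u, hu, eu⟩ := hedge j
  have hiv := vec_ne hi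
  have hjv := vec_ne hj
  apply theta_le _ _ hiv hjv
  have := main ri rj (by omega) (by omega)
    (by rw [hQe i ri hri, et]; exact smul_ne_zero ht.ne' hiv)
    (by rw [hQe j rj hrj, eu]; exact smul_ne_zero hu.ne' hjv)
  rw [hQe i ri hri, et, hQe j rj hrj, eu] at this
  exact AL_smul _ _ _ _ ht hu this

lemma forward {n : ℕ} (f : Fin n → LinFun) (hf : ∀ i, 0 < (f i).a)
    (hnc : ¬ Colinear f) (h : PotentiallyIdentical f) (σ : Equiv.Perm (Fin n)) :
    IsMinimum f σ ↔ Counterclockwise f σ := by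
  refine ⟨min_ccw f hf hnc σ, fun hσ => ?_⟩
  obtain ⟨τ, hτ, hid⟩ := h
  have hpos : ∀ (ρ : Equiv.Perm (Fin n)), ∀ x ∈ permList f ρ, 0 < x.a := by
    intro ρ x hx
    rw [permList, List.mem_ofFn] at hx
    obtain ⟨i, rfl⟩ := hx
    exact hf _
  have all : ∀ ρ, Counterclockwise f ρ → (permComp f ρ).IsId := by
    intro ρ hρ
    rw [ccw_iff] at hρ hτ
    obtain ⟨c, hc⟩ := hτ
    obtain ⟨c', hc'⟩ := hρ
    have e1 : (compList ((permList f τ).drop c ++ (permList f τ).take c)).IsId := by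
      apply id_rot
      · intro x hx; exact hpos τ x (List.mem_of_mem_take hx)
      · rw [List.take_append_drop]; exact hid
    have e2 := sorted_unique _ ((permList f ρ).drop c' ++ (permList f ρ).take c') (by
      refine List.perm_append_comm.trans ?_
      refine List.Perm.trans ?_ List.perm_append_comm
      rw [List.take_append_drop, List.take_append_drop]
      exact permList_perm f τ ρ) hc hc'
    rw [e2] at e1
    have := id_rot _ _ (by intro x hx; exact hpos ρ x (List.mem_of_mem_drop hx)) e1
    rwa [List.take_append_drop] at this
  obtain ⟨μ, hμ⟩ := Finite.exists_min (fun ρ : Equiv.Perm (Fin n) => (permComp f ρ).b)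
  have h1 := all μ (min_ccw f hf hnc μ hμ)
  have h2 := all σ hσ
  intro ρ
  rw [show permComp f σ = permComp f μ from Eq.trans h2 (Eq.symm h1)]
  exact hμ ρ

lemma backward {n : ℕ} (f : Fin n → LinFun) (hf : ∀ i, 0 < (f i).a)
    (hnc : ¬ Colinear f) (h : ∀ σ : Equiv.Perm (Fin n), IsMinimum f σ ↔ Counterclockwise f σ) :
    PotentiallyIdentical f := by
  let σ : Equiv.Perm (Fin n) := Tuple.sort (fun i => (f i).theta)
  have hm : Monotone ((fun i => (f i).theta) ∘ σ) := Tuple.monotone_sort _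
  have hσ0 : (permList f σ).Pairwise rel := by
    rw [List.pairwise_iff_getElem]
    intro i j hi hj hij
    simp only [permList, List.getElem_ofFn]
    right; right
    exact hm (Fin.mk_le_mk.mpr hij.le)
  have hσ : Counterclockwise f σ := by
    rw [ccw_iff]; exact ⟨0, by simpa using hσ0⟩
  refine ⟨σ, hσ, ?_⟩
  obtain ⟨L, hLdef⟩ : ∃ L, L = permList f σ := ⟨_, rfl⟩
  have hlen : L.length = n := by simp [hLdef, permList]
  have hL : ∀ x ∈ L, 0 < x.a := by
    intro x hx
    rw [hLdef, permList, List.mem_ofFn] at hx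
    obtain ⟨i, rfl⟩ := hx
    exact hf _
  have hget : ∀ i : Fin n, L[i.val]'(by omega) = f (σ i) := by
    intro i; subst hLdef; simp [permList]
  have hrot : ∀ k, k ≤ n → det (vec (compList L)) (W L k) = 0 := by
    intro k hk
    have hp : L.Perm (L.drop k ++ L.take k) := by
      refine List.Perm.trans ?_ List.perm_append_comm
      rw [List.take_append_drop]
    rw [hLdef] at hp
    obtain ⟨ρ, hρ⟩ := exists_perm f σ _ hp
    rw [← hLdef] at hρ
    have hρc : Counterclockwise f ρ := by
      rw [ccw_iff, hρ]
      refine ⟨n - k, ?_⟩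
      rw [List.drop_append_of_le_length (by simp; omega), List.take_append_of_le_length (by simp; omega)]
      have : (L.drop k).length = n - k := by simp; omega
      rw [← this, List.drop_length, List.take_length, List.nil_append, List.take_append_drop, hLdef]
      exact hσ0
    have e : (permComp f σ).b = (permComp f ρ).b :=
      le_antisymm ((h σ).2 hσ ρ) ((h ρ).2 hρc σ)
    unfold permComp at e
    rw [hρ, ← hLdef, ← List.take_append_drop k L, compList_append, List.take_append_drop,
      compList_append] at e
    have e3 : compList L = (compList (L.drop k)).comp (compList (L.take k)) := by
      rw [← compList_append, List.take_append_drop]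
    rw [e3]
    have h2 : 0 < (compList (L.take k)).a := compList_pos _ fun x hx => hL x (List.mem_of_mem_take hx)
    unfold W
    simp only [LinFun.comp] at e
    simp only [det, vec, wv, LinFun.comp]
    field_simp
    linear_combination e
  have hv : permComp f σ = compList L := by rw [hLdef]; rfl
  rw [hv]
  apply isId_of_vec
  by_contra hne
  apply hnc
  refine colinear_of f _ hne fun i => ?_
  obtain ⟨t, ht, e⟩ := W_edge L hL (σ.symm i).val (by omega)
  rw [hget, Equiv.apply_symm_apply] at e
  have h3 := hrot ((σ.symm i).val + 1) (by omega)
  have h4 := hrot (σ.symm i).val (by omega)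
  have h5 : det (vec (compList L)) (t • vec (f i)) = 0 := by
    rw [← e]; simp [det] at *; linarith
  have h6 : det (vec (compList L)) (t • vec (f i)) = t * det (vec (compList L)) (vec (f i)) := by
    simp [det]; ring
  rw [h6] at h5
  rcases mul_eq_zero.mp h5 with h | h
  · linarith
  · exact h

end S3

/-- for non-colinear monotone linear functions, potential identity is
equivalent to "minimum ⇔ counterclockwise". -/
theorem stmt3 {n : ℕ} (f : Fin n → LinFun) (hf : ∀ i, 0 < (f i).a)
    (hnc : ¬ Colinear f) :
    PotentiallyIdentical f ↔
      (∀ σ : Equiv.Perm (Fin n), IsMinimum f σ ↔ Counterclockwise f σ) := by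
  exact ⟨fun h σ => S3.forward f hf hnc h σ, fun h => S3.backward f hf hnc h⟩
end

section
/- Let f₁,…,f_n be monotone linear functions that are neither colinear nor potentially identical. Then a permutation σ of [n] is minimum if and only if σ is counterclockwise and θ(f^σ)+π ∈ [θ(f_{σ(t)}), θ(f_{σ(s)})]_{2π}, where s and t denote, respectively, the first and the last index i∈[n] such that f_{σ(i)} is non-identical. -/
open LinFun

theorem LinFun.ext' {f g : LinFun} (h1 : f.a = g.a) (h2 : f.b = g.b) : f = g := by
  cases f; cases g; simp_all

theorem cl_foldl (L : List LinFun) (h : LinFun) :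
    L.foldl (fun acc g => g.comp acc) h = (compList L).comp h := by
  unfold compList
  induction L generalizing h with
  | nil => apply LinFun.ext' <;> simp [LinFun.comp, LinFun.idf]
  | cons g L ih =>
    rw [List.foldl_cons, List.foldl_cons, ih, ih (g.comp idf)]
    apply LinFun.ext' <;> simp [LinFun.comp, LinFun.idf] <;> ring

theorem cl_append (X Y : List LinFun) : compList (X ++ Y) = (compList Y).comp (compList X) := by
  rw [← cl_foldl]; simp [compList]

theorem cl_nil : compList [] = idf := rfl

theorem cl_single (g : LinFun) : compList [g] = g := by
  apply LinFun.ext' <;> simp [compList, LinFun.comp, LinFun.idf]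

theorem cl_cons (g : LinFun) (L : List LinFun) : compList (g :: L) = (compList L).comp g := by
  rw [← List.singleton_append, cl_append, cl_single]

theorem cl_pos {L : List LinFun} (h : ∀ g ∈ L, 0 < g.a) : 0 < (compList L).a := by
  induction L with
  | nil => simp [cl_nil, idf]
  | cons g L ih =>
    rw [cl_cons]
    simp only [List.mem_cons, forall_eq_or_imp] at h
    exact mul_pos (ih h.2) h.1

/-- rotated coordinates -/
noncomputable def xc (φ : ℝ) (f : LinFun) : ℝ := f.b * Real.cos φ + (1 - f.a) * Real.sin φ
noncomputable def yc (φ : ℝ) (f : LinFun) : ℝ := - f.b * Real.sin φ + (1 - f.a) * Real.cos φ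
def dt (f g : LinFun) : ℝ := f.b * (1 - g.a) - (1 - f.a) * g.b

theorem dt_eq (φ : ℝ) (f g : LinFun) : dt f g = xc φ f * yc φ g - yc φ f * xc φ g := by
  have h := Real.sin_sq_add_cos_sq φ
  unfold dt xc yc
  linear_combination (-(f.b * (1 - g.a) - (1 - f.a) * g.b)) * h

theorem xc_comp (φ : ℝ) (h g : LinFun) : xc φ (h.comp g) = h.a * xc φ g + xc φ h := by
  unfold xc LinFun.comp; ring

theorem yc_comp (φ : ℝ) (h g : LinFun) : yc φ (h.comp g) = h.a * yc φ g + yc φ h := by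
  unfold yc LinFun.comp; ring

theorem xc_idf (φ : ℝ) : xc φ idf = 0 := by simp [xc, idf]
theorem yc_idf (φ : ℝ) : yc φ idf = 0 := by simp [yc, idf]

theorem comm_of_dt {f g : LinFun} (h : dt f g = 0) : f.comp g = g.comp f := by
  unfold dt at h
  apply LinFun.ext' <;> simp only [LinFun.comp]
  · ring
  · linarith

theorem b_le_of_dt {f g : LinFun} (h : 0 ≤ dt f g) : (g.comp f).b ≤ (f.comp g).b := by
  unfold dt at h
  simp only [LinFun.comp]; linarith

theorem dt_of_b_le {f g : LinFun} (h : (g.comp f).b ≤ (f.comp g).b) : 0 ≤ dt f g := by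
  simp only [LinFun.comp] at h
  unfold dt; linarith

/-! angles -/

theorem theta_mem (f : LinFun) : 0 ≤ f.theta ∧ f.theta < 2 * Real.pi := by
  unfold theta
  have h1 := Complex.neg_pi_lt_arg ⟨f.b, 1 - f.a⟩
  have h2 := Complex.arg_le_pi ⟨f.b, 1 - f.a⟩
  have := Real.pi_pos
  split_ifs with h
  · constructor <;> linarith
  · constructor <;> linarith

theorem polar (f : LinFun) : ∃ r : ℝ, 0 ≤ r ∧ f.b = r * Real.cos f.theta ∧
    1 - f.a = r * Real.sin f.theta ∧ (¬ f.IsId → 0 < r) := by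
  refine ⟨‖(⟨f.b, 1 - f.a⟩ : ℂ)‖, norm_nonneg _, ?_, ?_, ?_⟩
  · have := Complex.norm_mul_cos_arg ⟨f.b, 1 - f.a⟩
    unfold theta
    split_ifs with h
    · exact this.symm
    · rw [Real.cos_add_two_pi]; exact this.symm
  · have := Complex.norm_mul_sin_arg ⟨f.b, 1 - f.a⟩
    unfold theta
    split_ifs with h
    · exact this.symm
    · rw [Real.sin_add_two_pi]; exact this.symm
  · intro h
    rw [norm_pos_iff]
    intro h0
    apply h
    have h1 := congrArg Complex.re h0
    have h2 := congrArg Complex.im h0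
    simp at h1 h2
    apply LinFun.ext' <;> simp [idf] <;> linarith

noncomputable def kap (φ : ℝ) (f : LinFun) : ℝ := toIcoMod Real.two_pi_pos 0 (f.theta - φ)

theorem kap_mem (φ : ℝ) (f : LinFun) : 0 ≤ kap φ f ∧ kap φ f < 2 * Real.pi := by
  have := toIcoMod_mem_Ico Real.two_pi_pos 0 (f.theta - φ)
  simpa [kap] using this

theorem kap_cong (φ : ℝ) (f : LinFun) : ∃ k : ℤ, f.theta - φ = kap φ f + k * (2 * Real.pi) := by
  obtain ⟨_, k, hk⟩ := (toIcoMod_eq_iff Real.two_pi_pos (a := 0) (b := f.theta - φ)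
    (c := kap φ f)).1 rfl
  exact ⟨k, by simpa using hk⟩

theorem kap_eq {φ : ℝ} {f : LinFun} {c : ℝ} (k : ℤ) (h0 : 0 ≤ c) (h1 : c < 2 * Real.pi)
    (h : f.theta - φ = c + k * (2 * Real.pi)) : kap φ f = c :=
  (toIcoMod_eq_iff Real.two_pi_pos).2 ⟨⟨h0, by simpa using h1⟩, k, by simpa using h⟩

theorem kap_zero (f : LinFun) : kap 0 f = f.theta :=
  kap_eq 0 (theta_mem f).1 (theta_mem f).2 (by simp)

theorem polar' (φ : ℝ) (f : LinFun) : ∃ r : ℝ, 0 ≤ r ∧ xc φ f = r * Real.cos (kap φ f) ∧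
    yc φ f = r * Real.sin (kap φ f) ∧ (¬ f.IsId → 0 < r) := by
  obtain ⟨r, h0, h1, h2, h3⟩ := polar f
  obtain ⟨k, hk⟩ := kap_cong φ f
  have hk' : kap φ f = (f.theta - φ) - k * (2 * Real.pi) := by linarith
  refine ⟨r, h0, ?_, ?_, h3⟩
  · rw [hk', Real.cos_sub_int_mul_two_pi, Real.cos_sub, xc, h1, h2]; ring
  · rw [hk', Real.sin_sub_int_mul_two_pi, Real.sin_sub, yc, h1, h2]; ring

theorem sin_neg_of {t : ℝ} (h1 : Real.pi < t) (h2 : t < 2 * Real.pi) : Real.sin t < 0 := by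
  have := Real.sin_pos_of_pos_of_lt_pi (x := t - Real.pi) (by linarith) (by linarith)
  rw [Real.sin_sub_pi] at this; linarith

theorem kap_of_pos {φ : ℝ} {f : LinFun} (h : 0 < yc φ f) : 0 < kap φ f ∧ kap φ f < Real.pi := by
  obtain ⟨r, h0, h1, h2, h3⟩ := polar' φ f
  obtain ⟨k0, k1⟩ := kap_mem φ f
  rw [h2] at h
  have hs : 0 < Real.sin (kap φ f) := pos_of_mul_pos_right h h0
  constructor
  · rcases k0.lt_or_eq with h | h
    · exact h
    · rw [← h] at hs; simp at hs
  · by_contra hc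
    push Not at hc
    rcases hc.lt_or_eq with h | h
    · linarith [sin_neg_of h k1]
    · rw [← h] at hs; simp at hs

theorem kap_of_neg {φ : ℝ} {f : LinFun} (h : yc φ f < 0) : Real.pi < kap φ f := by
  obtain ⟨r, h0, h1, h2, h3⟩ := polar' φ f
  obtain ⟨k0, k1⟩ := kap_mem φ f
  rw [h2] at h
  by_contra hc
  push Not at hc
  have := mul_nonneg h0 (Real.sin_nonneg_of_nonneg_of_le_pi k0 hc)
  linarith

theorem kap_of_zero {φ : ℝ} {f : LinFun} (hf : ¬ f.IsId) (h : yc φ f = 0) :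
    (kap φ f = 0 ∧ 0 < xc φ f) ∨ (kap φ f = Real.pi ∧ xc φ f < 0) := by
  obtain ⟨r, h0, h1, h2, h3⟩ := polar' φ f
  obtain ⟨k0, k1⟩ := kap_mem φ f
  have hr := h3 hf
  rw [h2] at h
  have hs : Real.sin (kap φ f) = 0 := by
    rcases mul_eq_zero.1 h with h | h
    · linarith
    · exact h
  rcases lt_trichotomy (kap φ f) Real.pi with hp | hp | hp
  · left
    rcases k0.lt_or_eq with h | h
    · linarith [Real.sin_pos_of_pos_of_lt_pi h hp]
    · refine ⟨h.symm, ?_⟩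
      rw [h1, ← h]; simpa using hr
  · right
    refine ⟨hp, ?_⟩
    rw [h1, hp]; simpa using hr
  · linarith [sin_neg_of hp k1]

theorem dt_kap (φ : ℝ) (f g : LinFun) : ∃ r : ℝ, 0 ≤ r ∧ (¬ f.IsId → ¬ g.IsId → 0 < r) ∧
    dt f g = r * Real.sin (kap φ g - kap φ f) := by
  obtain ⟨r, h0, h1, h2, h3⟩ := polar' φ f
  obtain ⟨r', h0', h1', h2', h3'⟩ := polar' φ g
  refine ⟨r * r', mul_nonneg h0 h0', fun h h' => mul_pos (h3 h) (h3' h'), ?_⟩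
  rw [dt_eq φ, h1, h2, h1', h2', Real.sin_sub]; ring

theorem isId_of_y {φ : ℝ} {f : LinFun} (h : yc φ f ≠ 0) : ¬ f.IsId := by
  rintro h'
  rw [IsId] at h'
  subst h'
  exact h (yc_idf φ)

theorem kap_le_of_dt {φ : ℝ} {f g : LinFun} (hf : ¬ f.IsId) (hg : ¬ g.IsId) (h : 0 ≤ dt f g)
    (h1 : kap φ f - kap φ g < Real.pi) : kap φ f ≤ kap φ g := by
  obtain ⟨r, h0, hr, hd⟩ := dt_kap φ f g
  have := hr hf hg
  by_contra hc
  push Not at hc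
  have hs := Real.sin_pos_of_pos_of_lt_pi (x := kap φ f - kap φ g) (by linarith) h1
  have : Real.sin (kap φ g - kap φ f) < 0 := by
    rw [← neg_sub, Real.sin_neg]; linarith
  have := mul_neg_of_pos_of_neg (hr hf hg) this
  linarith

theorem comm_of_kap {φ : ℝ} {f g : LinFun} (h : kap φ f = kap φ g) : f.comp g = g.comp f := by
  obtain ⟨r, h0, hr, hd⟩ := dt_kap φ f g
  apply comm_of_dt
  rw [hd, h]; simp

theorem comm_of_id {f g : LinFun} (h : f.IsId) : f.comp g = g.comp f := by
  rw [IsId] at h; subst h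
  apply LinFun.ext' <;> simp [LinFun.comp, idf]

theorem comp_assoc' (f g h : LinFun) : (f.comp g).comp h = f.comp (g.comp h) := by
  apply LinFun.ext' <;> simp [LinFun.comp] <;> ring

theorem id_comp' {f g : LinFun} (h : f.IsId) : f.comp g = g := by
  rw [IsId] at h; subst h
  apply LinFun.ext' <;> simp [LinFun.comp, idf]

theorem comp_id' {f g : LinFun} (h : f.IsId) : g.comp f = g := by
  rw [← comm_of_id h, id_comp' h]

theorem cl_ids {L : List LinFun} (h : ∀ g ∈ L, g.IsId) : (compList L).IsId := by
  induction L with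
  | nil => rfl
  | cons g L ih =>
    rw [cl_cons]
    simp only [List.mem_cons, forall_eq_or_imp] at h
    rw [comp_id' h.1]; exact ih h.2
/-! sorted lists -/
def KS (κ : LinFun → ℝ) (L : List LinFun) : Prop :=
  L.Pairwise fun f g => ¬ f.IsId → ¬ g.IsId → κ f ≤ κ g

theorem cl_swap_all {a : LinFun} {S : List LinFun} (h : ∀ x ∈ S, x.comp a = a.comp x) :
    (compList S).comp a = a.comp (compList S) := by
  induction S with
  | nil => exact comm_of_id rfl
  | cons x S ih =>
    simp only [List.mem_cons, forall_eq_or_imp] at h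
    rw [cl_cons, comp_assoc', h.1, ← comp_assoc', ih h.2, comp_assoc']

theorem cl_sorted_eq (φ : ℝ) {C C' : List LinFun} (hp : C.Perm C') (h : KS (kap φ) C)
    (h' : KS (kap φ) C') : compList C = compList C' := by
  induction C generalizing C' with
  | nil => rw [List.nil_perm.1 hp]
  | cons a C ih =>
    have ha : a ∈ C' := hp.subset (by simp)
    obtain ⟨S, T, rfl⟩ := List.append_of_mem ha
    have hp' : C.Perm (S ++ T) := (hp.trans List.perm_middle).cons_inv
    have hST : KS (kap φ) (S ++ T) :=
      List.Pairwise.sublist (by simp) h'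
    have e := ih hp' (List.Pairwise.of_cons h) hST
    have hc : ∀ x ∈ S, x.comp a = a.comp x := by
      intro x hx
      by_cases hxi : x.IsId
      · exact comm_of_id hxi
      by_cases hai : a.IsId
      · exact (comm_of_id hai).symm
      have h1 : kap φ x ≤ kap φ a :=
        (List.pairwise_append.1 h').2.2 x hx a (by simp) hxi hai
      have h2 : kap φ a ≤ kap φ x :=
        (List.pairwise_cons.1 h).1 x (hp'.symm.subset (by simp [hx])) hai hxi
      exact comm_of_kap (le_antisymm h1 h2)
    rw [cl_cons, e, cl_append, cl_append, cl_cons, comp_assoc', comp_assoc', cl_swap_all hc]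

theorem KS_cut {κ : LinFun → ℝ} {L : List LinFun} (h : KS κ L) (t : ℝ) :
    ∃ X Y, L = X ++ Y ∧ (∀ g ∈ X, ¬ g.IsId → κ g < t) ∧ (∀ g ∈ Y, ¬ g.IsId → t ≤ κ g) := by
  induction L with
  | nil => exact ⟨[], [], by simp⟩
  | cons a L ih =>
    by_cases ha : ¬ a.IsId ∧ t ≤ κ a
    · refine ⟨[], a :: L, by simp, by simp, ?_⟩
      intro g hg hgi
      rcases List.mem_cons.1 hg with rfl | hg
      · exact ha.2
      · exact ha.2.trans ((List.pairwise_cons.1 h).1 g hg ha.1 hgi)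
    · obtain ⟨X, Y, rfl, hX, hY⟩ := ih (List.Pairwise.of_cons h)
      refine ⟨a :: X, Y, by simp, ?_, hY⟩
      intro g hg hgi
      rcases List.mem_cons.1 hg with rfl | hg
      · by_contra hc
        exact ha ⟨hgi, not_lt.1 hc⟩
      · exact hX g hg hgi

def CS (φ : ℝ) (L : List LinFun) : Prop := ∃ C, L ~r C ∧ KS (kap φ) C

theorem CS_change {φ : ℝ} (φ' : ℝ) {L : List LinFun} (h : CS φ L) : CS φ' L := by
  obtain ⟨C, hr, hC⟩ := h
  -- s in [0,2π) with φ' ≡ φ + s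
  obtain ⟨⟨s0, s1⟩, k, hk⟩ := (toIcoMod_eq_iff Real.two_pi_pos (a := 0) (b := φ' - φ)
    (c := toIcoMod Real.two_pi_pos 0 (φ' - φ))).1 rfl
  set s := toIcoMod Real.two_pi_pos 0 (φ' - φ)
  simp only [zero_add, zsmul_eq_mul] at s1 hk
  obtain ⟨X, Y, rfl, hX, hY⟩ := KS_cut hC s
  refine ⟨Y ++ X, hr.trans List.isRotated_append, ?_⟩
  obtain ⟨h1, h2, h3⟩ := List.pairwise_append.1 hC
  have eX : ∀ g ∈ X, ¬ g.IsId → kap φ' g = kap φ g - s + 2 * Real.pi := by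
    intro g hg hgi
    obtain ⟨m, hm⟩ := kap_cong φ g
    have := hX g hg hgi
    have := kap_mem φ g
    apply kap_eq (m - k - 1)
    · linarith
    · linarith
    · push_cast; linarith
  have eY : ∀ g ∈ Y, ¬ g.IsId → kap φ' g = kap φ g - s := by
    intro g hg hgi
    obtain ⟨m, hm⟩ := kap_cong φ g
    have := hY g hg hgi
    have := kap_mem φ g
    apply kap_eq (m - k)
    · linarith
    · linarith
    · push_cast; linarith
  refine List.pairwise_append.2 ⟨?_, ?_, ?_⟩
  · refine h2.imp_of_mem ?_
    intro f g hf hg h hfi hgi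
    rw [eY f hf hfi, eY g hg hgi]; linarith [h hfi hgi]
  · refine h1.imp_of_mem ?_
    intro f g hf hg h hfi hgi
    rw [eX f hf hfi, eX g hg hgi]; linarith [h hfi hgi]
  · intro f hf g hg hfi hgi
    rw [eY f hf hfi, eX g hg hgi]
    have := kap_mem φ f
    have := kap_mem φ g
    linarith

theorem CS_split {φ : ℝ} {L : List LinFun} (h : CS φ L) :
    ∃ X Y, L = X ++ Y ∧ KS (kap φ) (Y ++ X) := by
  obtain ⟨C, ⟨n, rfl⟩, hC⟩ := h
  rw [List.rotate_eq_drop_append_take_mod] at hC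
  exact ⟨_, _, (List.take_append_drop _ L).symm, hC⟩

theorem ccw_iff {n : ℕ} (f : Fin n → LinFun) (σ : Equiv.Perm (Fin n)) :
    Counterclockwise f σ ↔ CS 0 (permList f σ) := by
  have hk : kap 0 = LinFun.theta := funext kap_zero
  constructor
  · rintro ⟨c, hc⟩
    refine ⟨(permList f σ).drop c ++ (permList f σ).take c, ?_, ?_⟩
    · conv_lhs => rw [← List.take_append_drop c (permList f σ)]
      exact List.isRotated_append
    · rw [KS, hk, List.pairwise_append]
      refine ⟨?_, ?_, ?_⟩
      · rw [List.pairwise_iff_getElem]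
        intro i j hi hj hij h1 h2
        simp only [permList, List.getElem_drop, List.getElem_ofFn] at *
        exact hc _ _ h1 h2 (Or.inl ⟨by simp, by simp; omega⟩)
      · rw [List.pairwise_iff_getElem]
        intro i j hi hj hij h1 h2
        have hj' : j < c := lt_of_lt_of_le hj (List.length_take_le _ _)
        simp only [permList, List.getElem_take, List.getElem_ofFn] at *
        exact hc _ _ h1 h2 (Or.inr (Or.inl ⟨by simp; omega, by simp; omega⟩))
      · intro x hx y hy
        obtain ⟨i, hi, rfl⟩ := List.mem_iff_getElem.1 hx
        obtain ⟨j, hj, rfl⟩ := List.mem_iff_getElem.1 hy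
        intro h1 h2
        have hj' : j < c := lt_of_lt_of_le hj (List.length_take_le _ _)
        simp only [permList, List.getElem_take, List.getElem_drop, List.getElem_ofFn] at *
        exact hc _ _ h1 h2 (Or.inr (Or.inr ⟨by simp, by simp; omega⟩))
  · intro h
    obtain ⟨C, ⟨m, rfl⟩, hC⟩ := h
    rw [List.rotate_eq_drop_append_take_mod, KS, hk, List.pairwise_append] at hC
    obtain ⟨h1, h2, h3⟩ := hC
    set c := m % (permList f σ).length
    have hlen : (permList f σ).length = n := by simp [permList]
    have hd : ∀ i : Fin n, (hi : c ≤ i.val) → 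
        ∃ h : i.val - c < ((permList f σ).drop c).length, 
          ((permList f σ).drop c)[i.val - c] = f (σ i) := by
      intro i hi
      refine ⟨by simp [hlen]; omega, ?_⟩
      simp [permList, hi]
    have ht : ∀ i : Fin n, (hi : i.val < c) → 
        ∃ h : i.val < ((permList f σ).take c).length, 
          ((permList f σ).take c)[i.val] = f (σ i) := by
      intro i hi
      refine ⟨by simp [hlen]; omega, ?_⟩
      simp [permList]
    refine ⟨c, ?_⟩
    intro i j hi hj hor
    rcases hor with ⟨a, b⟩ | ⟨a, b⟩ | ⟨a, b⟩
    · rcases b.lt_or_eq with b | b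
      · obtain ⟨l1, e1⟩ := hd i a
        obtain ⟨l2, e2⟩ := hd j (by have : i.val < j.val := b; omega)
        have := List.pairwise_iff_getElem.1 h1 _ _ l1 l2 (by have : i.val < j.val := b; omega)
        rw [e1, e2] at this
        exact this hi hj
      · rw [b]
    · rcases a.lt_or_eq with a | a
      · obtain ⟨l1, e1⟩ := ht i (by have : i.val < j.val := a; omega)
        obtain ⟨l2, e2⟩ := ht j b
        have := List.pairwise_iff_getElem.1 h2 _ _ l1 l2 (by have : i.val < j.val := a; omega)
        rw [e1, e2] at this
        exact this hi hj
      · rw [a]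
    · obtain ⟨l1, e1⟩ := hd i a
      obtain ⟨l2, e2⟩ := ht j b
      have := h3 _ (List.getElem_mem l1) _ (List.getElem_mem l2)
      rw [e1, e2] at this
      exact this hi hj
def LocOpt (L : List LinFun) : Prop :=
  ∀ A X Y B, L = A ++ X ++ Y ++ B → 0 ≤ dt (compList X) (compList Y)

theorem y_nonneg {φ : ℝ} {L : List LinFun} (hp : ∀ g ∈ L, 0 < g.a) (h : ∀ g ∈ L, 0 ≤ yc φ g) :
    0 ≤ yc φ (compList L) := by
  induction L with
  | nil => rw [cl_nil, yc_idf]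
  | cons g L ih =>
    simp only [List.mem_cons, forall_eq_or_imp] at h hp
    rw [cl_cons, yc_comp]
    have := ih hp.2 h.2
    have := mul_nonneg (cl_pos hp.2).le h.1
    linarith

theorem y_nonpos {φ : ℝ} {L : List LinFun} (hp : ∀ g ∈ L, 0 < g.a) (h : ∀ g ∈ L, yc φ g ≤ 0) :
    yc φ (compList L) ≤ 0 := by
  induction L with
  | nil => rw [cl_nil, yc_idf]
  | cons g L ih =>
    simp only [List.mem_cons, forall_eq_or_imp] at h hp
    rw [cl_cons, yc_comp]
    have := ih hp.2 h.2
    have := mul_nonpos_of_nonneg_of_nonpos (cl_pos hp.2).le h.1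
    linarith

theorem real_A1 {c xP yP xM yM xG yG xF : ℝ} (hc : 0 < c) (hyP : 0 ≤ yP) (hyM : 0 < yM)
    (hG : yG < 0) (hF : xF < 0)
    (h1 : 0 ≤ xP * yM - yP * xM) (h2 : 0 ≤ xG * yM - yG * xM)
    (h3 : 0 ≤ xG * (-(c * yP)) - yG * (xF - c * xP)) : False := by
  have e1 := mul_nonneg_of_nonpos_of_nonpos (a := yG) (b := -(xP * yM - yP * xM)) hG.le (by linarith)
  have e2 := mul_nonneg hyP h2
  have e3 := mul_nonneg h3 hyM.le
  have e4 := mul_pos (mul_pos_of_neg_of_neg hG hF) hyM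
  have e5 := mul_nonneg hc.le (add_nonneg e1 e2)
  nlinarith

theorem real_A2 {xR yR xM yM xH yH xF c xQ yQ : ℝ} (hyR : yR ≤ 0) (hyM : yM < 0)
    (hH : 0 < yH) (hF : xF < 0) (hc : 0 < c) (hx : xF = c * xQ + xR) (hy : 0 = c * yQ + yR)
    (h1 : 0 ≤ xM * yR - yM * xR) (h2 : 0 ≤ xM * yH - yM * xH)
    (h3 : 0 ≤ xQ * yH - yQ * xH) : False := by
  have h3' : 0 ≤ (xF - xR) * yH + yR * xH := by
    have := mul_nonneg hc.le h3
    have e : (xF - xR) * yH + yR * xH = c * (xQ * yH - yQ * xH) := by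
      rw [hx]; linear_combination (-xH) * hy
    rw [e]; exact this
  have e1 := mul_nonneg hH.le h1
  have e2 := mul_nonneg_of_nonpos_of_nonpos hyR (b := -(xM * yH - yM * xH)) (by linarith)
  have e3 := mul_nonneg_of_nonpos_of_nonpos hyM.le (b := -((xF - xR) * yH + yR * xH)) (by linarith)
  have e4 := mul_pos (mul_pos_of_neg_of_neg hyM hF) hH
  nlinarith

theorem real_A3 {c xP yP xH yH xG yG xF : ℝ} (hc : 0 < c) (hyP : 0 ≤ yP)
    (hG : yG < 0) (hH : 0 < yH) (hF : xF < 0)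
    (h1 : 0 ≤ xP * yH - yP * xH) (h2 : 0 ≤ xG * yH - yG * xH)
    (h3 : 0 ≤ xG * (-(c * yP)) - yG * (xF - c * xP)) : False :=
  real_A1 hc hyP hH hG hF h1 h2 h3

section core
variable {φ : ℝ} {L : List LinFun}

theorem core_A (hp : ∀ g ∈ L, 0 < g.a) (hl : LocOpt L)
    (hx : xc φ (compList L) < 0) (hy : yc φ (compList L) = 0)
    {P M R : List LinFun} {G H : LinFun} (e : L = P ++ [G] ++ M ++ [H] ++ R)
    (hG : yc φ G < 0) (hH : 0 < yc φ H) : False := by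
  have o : ∀ A X Y B, L = A ++ X ++ Y ++ B →
      0 ≤ xc φ (compList X) * yc φ (compList Y) - yc φ (compList X) * xc φ (compList Y) := by
    intro A X Y B h
    rw [← dt_eq]; exact hl A X Y B h
  have pM : 0 < (compList M).a := cl_pos fun g hg => hp g (by simp [e, hg])
  have pR : 0 < (compList ([H] ++ R)).a := cl_pos fun g hg => hp g (by
    simp at hg; rcases hg with rfl | hg <;> simp [*])
  have a1 := o [] (P ++ [G]) (M ++ ([H] ++ R)) [] (by simp [e])
  have a2 := o [] (P ++ [G] ++ M) ([H] ++ R) [] (by simp [e])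
  have a3 := o (P ++ [G]) M ([H] ++ R) [] (by simp [e])
  have a4 := o [] (P ++ [G]) M ([H] ++ R) (by simp [e])
  have a5 := o P [G] M ([H] ++ R) (by simp [e])
  have a6 := o (P ++ [G]) M [H] R (by simp [e])
  have a7 := o P [G] (M ++ ([H] ++ R)) [] (by simp [e])
  have a8 := o [] (P ++ [G] ++ M) [H] R (by simp [e])
  have a9 := o P ([G] ++ M) [H] R (by simp [e])
  have a10 := o P ([G] ++ M) ([H] ++ R) [] (by simp [e])
  have e' : L = P ++ [G] ++ M ++ ([H] ++ R) := by simp [e]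
  generalize [H] ++ R = R' at *
  generalize P ++ [G] = P' at *
  rw [e'] at hx hy
  simp only [cl_append, cl_single, xc_comp, yc_comp] at *
  generalize (compList R').a = ra at *
  generalize (compList M).a = ma at *
  generalize xc φ (compList P') = xP at *
  generalize yc φ (compList P') = yP at *
  generalize xc φ (compList M) = xM at *
  generalize yc φ (compList M) = yM at *
  generalize xc φ (compList R') = xR at *
  generalize yc φ (compList R') = yR at *
  generalize xc φ G = xG at *
  generalize yc φ G = yG at *
  generalize xc φ H = xH at *
  generalize yc φ H = yH at *
  obtain ⟨xF, hF⟩ : ∃ xF, xF = ra * (ma * xP + xM) + xR := ⟨_, rfl⟩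
  rw [← hF] at hx
  have hc : 0 < ra * ma := mul_pos pR pM
  have yRM : ra * yM + yR = - (ra * ma * yP) := by linarith
  have xRM : ra * xM + xR = xF - ra * ma * xP := by linarith
  rw [yRM, xRM] at a1 a7
  have hyP : 0 ≤ yP := by
    have : 0 ≤ -(yP * xF) := by nlinarith
    by_contra h
    push Not at h
    nlinarith [mul_pos_of_neg_of_neg h hx]
  have hyR : yR ≤ 0 := by
    have e1 : ra * (ma * yP + yM) = - yR := by linarith
    have e2 : ra * (ma * xP + xM) = xF - xR := by linarith
    have : 0 ≤ ra * ((ma * xP + xM) * yR - (ma * yP + yM) * xR) := mul_nonneg pR.le a2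
    have e3 : ra * ((ma * xP + xM) * yR - (ma * yP + yM) * xR) = xF * yR := by
      linear_combination yR * e2 - xR * e1
    rw [e3] at this
    by_contra h
    push Not at h
    nlinarith [mul_neg_of_neg_of_pos hx h]
  rcases lt_trichotomy yM 0 with hM | hM | hM
  · exact real_A2 hyR hM hH hx pR hF (by linarith) a3 a6 a8
  · subst hM
    rcases lt_trichotomy xM 0 with hM | hM | hM
    · nlinarith [mul_pos_of_neg_of_neg hG hM]
    · subst hM
      refine real_A3 hc hyP hG hH hx (xP := xP) (xG := xG) (xH := xH) ?_ ?_ a7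
      · have : 0 ≤ ma * (xP * yH - yP * xH) := by linarith
        exact nonneg_of_mul_nonneg_right this pM
      · have : 0 ≤ ma * (xG * yH - yG * xH) := by linarith
        exact nonneg_of_mul_nonneg_right this pM
    · have h1 : yP = 0 := by
        apply le_antisymm _ hyP
        have : 0 ≤ (-yP) * xM := by linarith
        linarith [nonneg_of_mul_nonneg_left this hM]
      have h2 : yR = 0 := by rw [h1] at hy; linarith
      subst h1 h2
      have h3 : 0 ≤ ma * xP + xM := nonneg_of_mul_nonneg_left (b := yH) (by linarith) hH
      have h4 : 0 ≤ xR := by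
        have : 0 ≤ (ma * (-yG)) * xR := by linarith
        exact nonneg_of_mul_nonneg_right this (mul_pos pM (by linarith))
      nlinarith [mul_nonneg pR.le h3]
  · exact real_A1 hc hyP hM hG hx a4 a5 a7

theorem real_B {xG yG xM yM xH yH ma : ℝ} (hm : 0 < ma) (hM : 0 ≤ yM) (hG : 0 < yG) (hH : 0 < yH)
    (h1 : 0 ≤ xG * yM - yG * xM) (h2 : 0 ≤ xM * yH - yM * xH)
    (h3 : 0 ≤ (ma * xG + xM) * yH - (ma * yG + yM) * xH) : 0 ≤ xG * yH - yG * xH := by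
  rcases hM.lt_or_eq with hM | hM
  · have e1 := mul_nonneg h1 hH.le
    have e2 := mul_nonneg hG.le h2
    have : 0 ≤ yM * (xG * yH - yG * xH) := by linarith
    exact nonneg_of_mul_nonneg_right this hM
  · subst hM
    have a1 : 0 ≤ yG * (-xM) := by linarith
    have a1 := nonneg_of_mul_nonneg_right a1 hG
    have a2 : 0 ≤ xM * yH := by linarith
    have a2 := nonneg_of_mul_nonneg_left a2 hH
    have : xM = 0 := by linarith
    subst this
    have : 0 ≤ ma * (xG * yH - yG * xH) := by linarith
    exact nonneg_of_mul_nonneg_right this hm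

theorem after_neg (hp : ∀ g ∈ L, 0 < g.a) (hl : LocOpt L)
    (hx : xc φ (compList L) < 0) (hy : yc φ (compList L) = 0)
    {P R : List LinFun} {G : LinFun} (e : L = P ++ [G] ++ R)
    (hG : yc φ G < 0) : ∀ h ∈ R, yc φ h ≤ 0 := by
  intro h hh
  obtain ⟨S, T, rfl⟩ := List.append_of_mem hh
  by_contra hc
  exact core_A hp hl hx hy (P := P) (M := S) (R := T) (G := G) (H := h) (by simp [e]) hG
    (not_le.1 hc)

theorem before_pos (hp : ∀ g ∈ L, 0 < g.a) (hl : LocOpt L)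
    (hx : xc φ (compList L) < 0) (hy : yc φ (compList L) = 0)
    {P R : List LinFun} {H : LinFun} (e : L = P ++ [H] ++ R)
    (hH : 0 < yc φ H) : ∀ h ∈ P, 0 ≤ yc φ h := by
  intro h hh
  obtain ⟨S, T, rfl⟩ := List.append_of_mem hh
  by_contra hc
  exact core_A hp hl hx hy (P := S) (M := T) (R := R) (G := h) (H := H) (by simp [e])
    (not_le.1 hc) hH

theorem core_B (hp : ∀ g ∈ L, 0 < g.a) (hl : LocOpt L)
    (hx : xc φ (compList L) < 0) (hy : yc φ (compList L) = 0)
    {P M R : List LinFun} {G H : LinFun} (e : L = P ++ [G] ++ M ++ [H] ++ R)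
    (h : (0 < yc φ G ∧ 0 < yc φ H) ∨ (yc φ G < 0 ∧ yc φ H < 0)) : 0 ≤ dt G H := by
  have pM' : ∀ g ∈ M, 0 < g.a := fun g hg => hp g (by simp [e, hg])
  have pM : 0 < (compList M).a := cl_pos pM'
  have a1 := hl P [G] M ([H] ++ R) (by simp [e])
  have a2 := hl (P ++ [G]) M [H] R (by simp [e])
  have a3 := hl P ([G] ++ M) [H] R (by simp [e])
  rw [dt_eq φ] at a1 a2 a3 ⊢
  simp only [cl_append, cl_single, xc_comp, yc_comp] at a1 a2 a3
  rcases h with ⟨hG, hH⟩ | ⟨hG, hH⟩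
  · have hM : 0 ≤ yc φ (compList M) := by
      apply y_nonneg pM'
      intro g hg
      exact before_pos hp hl hx hy (P := P ++ [G] ++ M) (R := R) (H := H) e hH g (by simp [hg])
    exact real_B pM hM hG hH a1 a2 a3
  · have hM : yc φ (compList M) ≤ 0 := by
      apply y_nonpos pM'
      intro g hg
      exact after_neg hp hl hx hy (P := P) (R := M ++ [H] ++ R) (G := G) (by simp [e]) hG g
        (by simp [hg])
    have := real_B (xG := - xc φ G) (yG := - yc φ G) (xM := - xc φ (compList M))
      (yM := - yc φ (compList M)) (xH := - xc φ H) (yH := - yc φ H) pM (by linarith) (by linarith)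
      (by linarith) (by linarith) (by linarith) (by linarith)
    linarith

/-- zero-height element `N` following a block `B` -/
theorem zero_after (hl : LocOpt L) {A B D : List LinFun} {N : LinFun} (e : L = A ++ B ++ [N] ++ D)
    (hN : yc φ N = 0) : yc φ (compList B) * xc φ N ≤ 0 := by
  have := hl A B [N] D (by simp [e])
  rw [dt_eq φ, cl_single, hN] at this
  linarith

theorem zero_before (hl : LocOpt L) {A B D : List LinFun} {N : LinFun} (e : L = A ++ [N] ++ B ++ D)
    (hN : yc φ N = 0) : 0 ≤ xc φ N * yc φ (compList B) := by
  have := hl A [N] B D (by simp [e])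
  rw [dt_eq φ, cl_single, hN] at this
  linarith

end core

theorem last_split {p : LinFun → Prop} {L : List LinFun} (h : ∃ g ∈ L, p g) :
    ∃ X G Y, L = X ++ [G] ++ Y ∧ p G ∧ ∀ h ∈ Y, ¬ p h := by
  induction L with
  | nil => simp at h
  | cons a L ih =>
    by_cases h' : ∃ g ∈ L, p g
    · obtain ⟨X, G, Y, rfl, hG, hY⟩ := ih h'
      exact ⟨a :: X, G, Y, by simp, hG, hY⟩
    · push Not at h'
      obtain ⟨g, hg, hpg⟩ := h
      rcases List.mem_cons.1 hg with rfl | hg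
      · exact ⟨[], g, L, by simp, hpg, h'⟩
      · exact absurd hpg (h' g hg)

theorem pairwise_of_split {r : LinFun → LinFun → Prop} {L : List LinFun}
    (h : ∀ P f M g R, L = P ++ [f] ++ M ++ [g] ++ R → r f g) : L.Pairwise r := by
  induction L with
  | nil => simp
  | cons a L ih =>
    refine List.pairwise_cons.2 ⟨?_, ?_⟩
    · intro g hg
      obtain ⟨S, T, rfl⟩ := List.append_of_mem hg
      exact h [] a S g T (by simp)
    · apply ih
      rintro P f M g R rfl
      exact h (a :: P) f M g R (by simp)

theorem core {φ : ℝ} {L : List LinFun} (hp : ∀ g ∈ L, 0 < g.a) (hl : LocOpt L)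
    (hx : xc φ (compList L) < 0) (hy : yc φ (compList L) = 0) (hne : ∃ g ∈ L, yc φ g ≠ 0) :
    ∃ X Y, L = X ++ Y ∧ KS (kap φ) X ∧ ∀ g ∈ Y, ¬ g.IsId → kap φ g = 0 := by
  have hneg : ∃ g ∈ L, yc φ g < 0 := by
    by_contra hc
    push Not at hc
    obtain ⟨g, hg, hg0⟩ := hne
    obtain ⟨S, T, e⟩ := List.append_of_mem hg
    have hg1 : 0 < yc φ g := lt_of_le_of_ne (hc g hg) (Ne.symm hg0)
    have hS := y_nonneg (φ := φ) (L := S) (fun g hg => hp g (by simp [e, hg]))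
      (fun g hg => hc g (by simp [e, hg]))
    have hT := y_nonneg (φ := φ) (L := T) (fun g hg => hp g (by simp [e, hg]))
      (fun g hg => hc g (by simp [e, hg]))
    have pT : 0 < (compList T).a := cl_pos (fun g hg => hp g (by simp [e, hg]))
    rw [e, cl_append, cl_cons, yc_comp, yc_comp] at hy
    have pg := hp g hg
    have : 0 < (compList T).a * yc φ g := mul_pos pT hg1
    have : 0 ≤ ((compList T).comp g).a * yc φ (compList S) :=
      mul_nonneg (mul_pos pT pg).le hS
    linarith
  obtain ⟨X, G, Y, e, hG, hY⟩ := last_split hneg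
  have pG : 0 < G.a := hp G (by simp [e])
  have hY0 := after_neg hp hl hx hy e hG
  refine ⟨X ++ [G], Y, e, ?_, ?_⟩
  · apply pairwise_of_split
    intro P f M g R e2 hf hg
    have e3 : L = P ++ [f] ++ M ++ [g] ++ (R ++ Y) := by rw [e, e2]; simp
    -- a zero-height element of `X` with nothing positive after is opposite
    have zopp : ∀ A N B, X ++ [G] = A ++ [N] ++ B → yc φ N = 0 → ¬ N.IsId →
        (∀ h ∈ B, yc φ h ≤ 0) → xc φ N < 0 := by
      intro A N B e4 hN hNi hB
      have hGN : N ≠ G := by rintro rfl; linarith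
      rcases List.eq_nil_or_concat B with rfl | ⟨B', G', rfl⟩
      · have := congrArg List.getLast? e4
        simp at this
        exact absurd this.symm hGN
      · have e6 : X ++ [G] = (A ++ [N] ++ B') ++ [G'] := by rw [e4]; simp
        have h1 := (List.append_inj' e6 rfl).2
        simp only [List.cons.injEq, and_true] at h1
        subst h1
        have e5 : L = A ++ [N] ++ (B' ++ [G]) ++ Y := by rw [e, e4]; simp
        have h2 := zero_before hl e5 hN
        rw [cl_append, cl_single, yc_comp] at h2
        have hB' : yc φ (compList B') ≤ 0 := by
          apply y_nonpos
          · intro h hh; exact hp h (by simp [e5, hh])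
          · intro h hh; exact hB h (by simp [hh])
        have h3 : G.a * yc φ (compList B') + yc φ G < 0 := by
          have := mul_nonpos_of_nonneg_of_nonpos pG.le hB'
          linarith
        rcases kap_of_zero hNi hN with h | h
        · have := mul_neg_of_pos_of_neg h.2 h3
          linarith
        · exact h.2
    -- positive after
    have zpos : ∀ A N B H D, L = A ++ [N] ++ B ++ [H] ++ D → yc φ N = 0 → ¬ N.IsId →
        0 < yc φ H → 0 < xc φ N := by
      intro A N B H D e5 hN hNi hH
      have h2 := zero_before (A := A) (N := N) (B := B ++ [H]) (D := D) hl (by simp [e5]) hN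
      rw [cl_append, cl_single, yc_comp] at h2
      have hB' : 0 ≤ yc φ (compList B) := by
        apply y_nonneg
        · intro h hh; exact hp h (by simp [e5, hh])
        · intro h hh
          exact before_pos hp hl hx hy (P := A ++ [N] ++ B) (H := H) (R := D) e5 hH h (by simp [hh])
      have pH : 0 < H.a := hp H (by simp [e5])
      have h3 : 0 < H.a * yc φ (compList B) + yc φ H := by
        have := mul_nonneg pH.le hB'
        linarith
      rcases kap_of_zero hNi hN with h | h
      · exact h.2
      · have := mul_neg_of_neg_of_pos h.2 h3
        linarith
    have hpi := Real.pi_pos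
    rcases lt_trichotomy (yc φ f) 0 with yf | yf | yf
    · rcases lt_trichotomy (yc φ g) 0 with yg | yg | yg
      · apply kap_le_of_dt hf hg (core_B hp hl hx hy e3 (Or.inr ⟨yf, yg⟩))
        linarith [kap_of_neg yf, kap_of_neg yg, kap_mem φ f]
      · exfalso
        have hall := after_neg hp hl hx hy (P := P) (G := f) (R := M ++ [g] ++ (R ++ Y))
          (by simp [e3]) yf
        have h1 := zopp (P ++ [f] ++ M) g R e2 yg hg (fun h hh => hall h (by simp [hh]))
        have h2 := zero_after (A := P) (B := [f] ++ M) (N := g) (D := R ++ Y) hl (by simp [e3]) yg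
        rw [cl_append, cl_single, yc_comp] at h2
        have hM : yc φ (compList M) ≤ 0 := by
          apply y_nonpos
          · intro h hh; exact hp h (by simp [e3, hh])
          · intro h hh; exact hall h (by simp [hh])
        have pM : 0 < (compList M).a := cl_pos (fun h hh => hp h (by simp [e3, hh]))
        have := mul_neg_of_pos_of_neg pM yf
        have := mul_pos_of_neg_of_neg (a := (compList M).a * yc φ f + yc φ (compList M))
          (by linarith) h1
        linarith
      · exact (core_A hp hl hx hy e3 yf yg).elim
    · rcases kap_of_zero hf yf with ⟨h, _⟩ | ⟨h, hxf⟩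
      · rw [h]; exact (kap_mem φ g).1
      · rw [h]
        rcases lt_trichotomy (yc φ g) 0 with yg | yg | yg
        · exact (kap_of_neg yg).le
        · have := zopp (P ++ [f] ++ M) g R e2 yg hg (by
            intro h hh
            obtain ⟨S, T, rfl⟩ := List.append_of_mem hh
            by_contra hc
            push Not at hc
            have := zpos P f (M ++ [g] ++ S) h (T ++ Y) (by simp [e3]) yf hf hc
            linarith)
          rcases kap_of_zero hg yg with ⟨h, h'⟩ | ⟨h, h'⟩
          · linarith
          · exact h.ge
        · have := zpos P f M g (R ++ Y) e3 yf hf yg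
          linarith
    · rcases lt_trichotomy (yc φ g) 0 with yg | yg | yg
      · linarith [kap_of_pos yf, kap_of_neg yg]
      · have : xc φ g < 0 := by
          by_cases hR : ∀ h ∈ R, yc φ h ≤ 0
          · exact zopp (P ++ [f] ++ M) g R e2 yg hg hR
          · push Not at hR
            exfalso
            obtain ⟨h, hh, hyh⟩ := hR
            obtain ⟨S, T, rfl⟩ := List.append_of_mem hh
            have h1 := zpos (P ++ [f] ++ M) g S h (T ++ Y) (by simp [e3]) yg hg hyh
            have h2 := zero_after (A := P) (B := [f] ++ M) (N := g) (D := S ++ h :: T ++ Y) hl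
              (by simp [e3]) yg
            rw [cl_append, cl_single, yc_comp] at h2
            have hM : 0 ≤ yc φ (compList M) := by
              apply y_nonneg
              · intro k hk; exact hp k (by simp [e3, hk])
              · intro k hk
                exact before_pos hp hl hx hy (P := P ++ [f] ++ M ++ [g] ++ S) (H := h) (R := T ++ Y)
                  (by simp [e3]) hyh k (by simp [hk])
            have pM : 0 < (compList M).a := cl_pos (fun h hh => hp h (by simp [e3, hh]))
            have := mul_pos pM yf
            have := mul_pos (a := (compList M).a * yc φ f + yc φ (compList M))
              (by linarith) h1
            linarith
        rcases kap_of_zero hg yg with ⟨h, h'⟩ | ⟨h, h'⟩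
        · linarith
        · rw [h]; exact (kap_of_pos yf).2.le
      · apply kap_le_of_dt hf hg (core_B hp hl hx hy e3 (Or.inl ⟨yf, yg⟩))
        linarith [kap_of_pos yf, kap_of_pos yg]
  · intro N hN hNi
    have yN : yc φ N = 0 := le_antisymm (hY0 N hN) (not_lt.1 (hY N hN))
    obtain ⟨S, T, rfl⟩ := List.append_of_mem hN
    have h2 := zero_after (A := X) (B := [G] ++ S) (N := N) (D := T) hl (by simp [e]) yN
    rw [cl_append, cl_single, yc_comp] at h2
    have hS : yc φ (compList S) ≤ 0 := by
      apply y_nonpos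
      · intro k hk; exact hp k (by simp [e, hk])
      · intro k hk; exact hY0 k (by simp [hk])
    have pS : 0 < (compList S).a := cl_pos (fun h hh => hp h (by simp [e, hh]))
    rcases kap_of_zero hNi yN with ⟨h, h'⟩ | ⟨h, h'⟩
    · exact h
    · have := mul_neg_of_pos_of_neg pS hG
      have := mul_pos_of_neg_of_neg (a := (compList S).a * yc φ G + yc φ (compList S))
        (by linarith) h'
      linarith
theorem perm_map_lift {α β : Type} (f : α → β) {L M : List β} (h : L.Perm M) :
    ∀ K : List α, M = K.map f → ∃ K' : List α, K'.Perm K ∧ L = K'.map f := by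
  induction h with
  | nil => intro K hK; exact ⟨[], by simp at hK; simp [hK]⟩
  | cons x h ih =>
    intro K hK
    cases K with
    | nil => simp at hK
    | cons k K =>
      simp only [List.map_cons, List.cons.injEq] at hK
      obtain ⟨K', h1, h2⟩ := ih K hK.2
      exact ⟨k :: K', h1.cons k, by simp [h2, hK.1]⟩
  | swap x y l =>
    intro K hK
    match K, hK with
    | a :: b :: K, hK =>
      simp only [List.map_cons, List.cons.injEq] at hK
      exact ⟨b :: a :: K, List.Perm.swap _ _ _, by simp [hK]⟩
  | trans h1 h2 ih1 ih2 =>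
    intro K hK
    obtain ⟨K1, a1, b1⟩ := ih2 K hK
    obtain ⟨K2, a2, b2⟩ := ih1 K1 b1
    exact ⟨K2, a2.trans a1, b2⟩

theorem exists_perm {n : ℕ} (f : Fin n → LinFun) (σ : Equiv.Perm (Fin n)) {L : List LinFun}
    (h : L.Perm (permList f σ)) : ∃ ρ : Equiv.Perm (Fin n), permList f ρ = L := by
  obtain ⟨K, hK, rfl⟩ := perm_map_lift f h (List.ofFn σ) (by rw [List.map_ofFn]; rfl)
  have hlen : K.length = n := by rw [hK.length_eq]; simp
  have hnd : K.Nodup := hK.nodup_iff.2 (List.nodup_ofFn.2 σ.injective)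
  have hinj : Function.Injective (fun i : Fin n => K.get (Fin.cast hlen.symm i)) := by
    intro a b hab
    have := List.nodup_iff_injective_get.1 hnd hab
    exact Fin.cast_injective _ this
  refine ⟨Equiv.ofBijective _ (Finite.injective_iff_bijective.1 hinj), ?_⟩
  unfold permList
  apply List.ext_getElem
  · simp [hlen]
  · intro i h1 h2
    simp

theorem locOpt_of_min {n : ℕ} {f : Fin n → LinFun} (hf : ∀ i, 0 < (f i).a)
    {σ : Equiv.Perm (Fin n)} (h : IsMinimum f σ) : LocOpt (permList f σ) := by
  intro A X Y B e
  have hp : (A ++ Y ++ X ++ B).Perm (permList f σ) := by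
    rw [e]
    apply List.Perm.append_right
    rw [List.append_assoc, List.append_assoc]
    exact List.Perm.append_left _ List.perm_append_comm
  obtain ⟨ρ, hρ⟩ := exists_perm f σ hp
  have hm := h ρ
  have pB : 0 < (compList B).a := by
    apply cl_pos
    intro g hg
    have : g ∈ permList f σ := by simp [e, hg]
    rw [permList, List.mem_ofFn] at this
    obtain ⟨i, rfl⟩ := this
    exact hf _
  unfold permComp at hm
  rw [hρ, e] at hm
  simp only [cl_append] at hm
  apply dt_of_b_le
  simp only [LinFun.comp] at hm ⊢
  refine le_of_mul_le_mul_left ?_ pB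
  nlinarith

theorem mem_pos {n : ℕ} {f : Fin n → LinFun} (hf : ∀ i, 0 < (f i).a)
    (σ : Equiv.Perm (Fin n)) : ∀ g ∈ permList f σ, 0 < g.a := by
  intro g hg
  rw [permList, List.mem_ofFn] at hg
  obtain ⟨i, rfl⟩ := hg
  exact hf _

theorem colinear_of {n : ℕ} {f : Fin n → LinFun} {σ : Equiv.Perm (Fin n)} (φ : ℝ)
    (h : ∀ g ∈ permList f σ, yc φ g = 0) : Colinear f := by
  refine ⟨φ, fun i => ?_⟩
  by_cases hi : (f i).IsId
  · exact Or.inl hi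
  right
  have hy := h (f i) (by rw [permList, List.mem_ofFn]; exact ⟨σ.symm i, by simp⟩)
  obtain ⟨k, hk⟩ := kap_cong φ (f i)
  rcases kap_of_zero hi hy with ⟨h, _⟩ | ⟨h, _⟩
  · left; exact ⟨k, by rw [hk, h]; ring⟩
  · right; exact ⟨k, by rw [h] at hk; linarith⟩

theorem opp_coord {F : LinFun} (hF : ¬ F.IsId) :
    xc (F.theta + Real.pi) F < 0 ∧ yc (F.theta + Real.pi) F = 0 := by
  obtain ⟨r, h0, h1, h2, h3⟩ := polar' (F.theta + Real.pi) F
  have hk : kap (F.theta + Real.pi) F = Real.pi :=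
    kap_eq (-1) Real.pi_pos.le (by linarith [Real.pi_pos]) (by push_cast; ring)
  rw [hk] at h1 h2
  simp at h1 h2
  exact ⟨by linarith [h3 hF], h2⟩

theorem self_coord {F : LinFun} (hF : ¬ F.IsId) :
    kap F.theta F = 0 ∧ 0 < xc F.theta F ∧ yc F.theta F = 0 := by
  obtain ⟨r, h0, h1, h2, h3⟩ := polar' F.theta F
  have hk : kap F.theta F = 0 :=
    kap_eq 0 le_rfl Real.two_pi_pos (by push_cast; ring)
  rw [hk] at h1 h2
  simp at h1 h2
  exact ⟨hk, by linarith [h3 hF], h2⟩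

theorem y_of_kap_zero {φ : ℝ} {f : LinFun} (h : ¬ f.IsId → kap φ f = 0) : yc φ f = 0 := by
  by_cases hf : f.IsId
  · rw [IsId] at hf; subst hf; exact yc_idf φ
  · obtain ⟨r, h0, h1, h2, h3⟩ := polar' φ f
    rw [h2, h hf]; simp

theorem first_split {p : LinFun → Prop} {L : List LinFun} (h : ∃ g ∈ L, p g) :
    ∃ X G Y, L = X ++ [G] ++ Y ∧ p G ∧ ∀ h ∈ X, ¬ p h := by
  induction L with
  | nil => simp at h
  | cons a L ih =>
    by_cases ha : p a
    · exact ⟨[], a, L, by simp, ha, by simp⟩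
    · have : ∃ g ∈ L, p g := by
        obtain ⟨g, hg, hpg⟩ := h
        rcases List.mem_cons.1 hg with rfl | hg
        · exact absurd hpg ha
        · exact ⟨g, hg, hpg⟩
      obtain ⟨X, G, Y, rfl, hG, hX⟩ := ih this
      exact ⟨a :: X, G, Y, by simp, hG, by simpa [ha] using hX⟩

theorem min_nonid {n : ℕ} {f : Fin n → LinFun} (hf : ∀ i, 0 < (f i).a)
    (hnc : ¬ Colinear f) (hnp : ¬ PotentiallyIdentical f) {σ : Equiv.Perm (Fin n)}
    (h : IsMinimum f σ) : ¬ (permComp f σ).IsId := by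
  intro hid
  apply hnp
  refine ⟨σ, ?_, hid⟩
  have hl := locOpt_of_min hf h
  have hp := mem_pos hf σ
  have hex : ∃ g ∈ permList f σ, ¬ g.IsId := by
    by_contra hc
    push Not at hc
    apply hnc
    apply colinear_of (σ := σ) 0
    intro g hg
    exact y_of_kap_zero (fun h => absurd (hc g hg) h)
  obtain ⟨I, g, T, e, hg, hI⟩ := first_split hex
  have hI' : ∀ h ∈ I, h.IsId := fun h hh => not_not.1 (hI h hh)
  have pT : ∀ g ∈ T, 0 < g.a := fun g hg => hp g (by simp [e, hg])
  obtain ⟨k0, gx, gy⟩ := self_coord hg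
  set φ := g.theta
  have hT : ((compList T).comp g).IsId := by
    have := hid
    unfold permComp at this
    rw [e, cl_append, cl_append, cl_single, comp_id' (cl_ids hI')] at this
    exact this
  have pTa := cl_pos pT
  have hTx := xc_comp φ (compList T) g
  have hTy := yc_comp φ (compList T) g
  rw [IsId] at hT
  rw [hT, xc_idf] at hTx
  rw [hT, yc_idf, gy] at hTy
  have hTx' : xc φ (compList T) < 0 := by linarith [mul_pos pTa gx]
  have hTy' : yc φ (compList T) = 0 := by linarith
  have hlT : LocOpt T := by
    intro A X Y B e2
    exact hl (I ++ [g] ++ A) X Y B (by rw [e, e2]; simp)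
  have hne : ∃ g ∈ T, yc φ g ≠ 0 := by
    by_contra hc
    push Not at hc
    apply hnc
    apply colinear_of (σ := σ) φ
    intro h hh
    rw [e] at hh
    simp only [List.mem_append, List.mem_singleton] at hh
    rcases hh with (hh | rfl) | hh
    · exact y_of_kap_zero (fun h' => absurd (hI' h hh) h')
    · exact gy
    · exact hc h hh
  obtain ⟨X, Y, rfl, hX, hY⟩ := core pT hlT hTx' hTy' hne
  rw [ccw_iff]
  apply CS_change (φ := φ)
  refine ⟨Y ++ (I ++ [g] ++ X), ?_, ?_⟩
  · rw [e, ← List.append_assoc]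
    exact List.isRotated_append
  · have hIX : KS (kap φ) (I ++ [g] ++ X) := by
      refine List.pairwise_append.2 ⟨List.pairwise_append.2 ⟨?_, by simp, ?_⟩, hX, ?_⟩
      · apply List.pairwise_of_forall_mem_list
        intro a ha b hb hai
        exact absurd (hI' a ha) hai
      · intro a ha b hb hai
        exact absurd (hI' a ha) hai
      · intro a ha b hb hai hbi
        simp only [List.mem_append, List.mem_singleton] at ha
        rcases ha with ha | rfl
        · exact absurd (hI' a ha) hai
        · rw [k0]; exact (kap_mem φ b).1
    refine List.pairwise_append.2 ⟨?_, hIX, ?_⟩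
    · apply List.pairwise_of_forall_mem_list
      intro a ha b hb hai hbi
      rw [hY a ha hai]; exact (kap_mem φ b).1
    · intro a ha b hb hai hbi
      rw [hY a ha hai]; exact (kap_mem φ b).1

theorem min_star {n : ℕ} {f : Fin n → LinFun} (hf : ∀ i, 0 < (f i).a)
    (hnc : ¬ Colinear f) (hnp : ¬ PotentiallyIdentical f) {σ : Equiv.Perm (Fin n)}
    (h : IsMinimum f σ) : ∃ X Y, permList f σ = X ++ Y ∧
      KS (kap ((permComp f σ).theta + Real.pi)) X ∧
      ∀ g ∈ Y, ¬ g.IsId → kap ((permComp f σ).theta + Real.pi) g = 0 := by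
  obtain ⟨hx, hy⟩ := opp_coord (min_nonid hf hnc hnp h)
  apply core (mem_pos hf σ) (locOpt_of_min hf h) hx hy
  by_contra hc
  push Not at hc
  exact hnc (colinear_of (σ := σ) _ hc)

theorem star_CS {φ : ℝ} {X Y : List LinFun} (hX : KS (kap φ) X)
    (hY : ∀ g ∈ Y, ¬ g.IsId → kap φ g = 0) : CS φ (X ++ Y) := by
  refine ⟨Y ++ X, List.isRotated_append, List.pairwise_append.2 ⟨?_, hX, ?_⟩⟩
  · apply List.pairwise_of_forall_mem_list
    intro a ha b hb hai hbi
    rw [hY a ha hai]; exact (kap_mem φ b).1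
  · intro a ha b hb hai hbi
    rw [hY a ha hai]; exact (kap_mem φ b).1

theorem split_idx {n : ℕ} {h : Fin n → LinFun} {X Y : List LinFun} (e : List.ofFn h = X ++ Y) :
    X.length + Y.length = n ∧
    (∀ i : Fin n, i.val < X.length → ∃ l : i.val < X.length, X[i.val] = h i) ∧
    (∀ i : Fin n, X.length ≤ i.val → ∃ l : i.val - X.length < Y.length,
      Y[i.val - X.length] = h i) := by
  have hlen : X.length + Y.length = n := by
    have := congrArg List.length e
    simpa using this.symm
  have key : ∀ i : Fin n, (X ++ Y)[i.val]? = some (h i) := by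
    intro i; rw [← e]; simp
  refine ⟨hlen, ?_, ?_⟩
  · intro i hi
    refine ⟨hi, ?_⟩
    have := key i
    rw [List.getElem?_append_left hi, List.getElem?_eq_getElem hi] at this
    exact Option.some.inj this
  · intro i hi
    have hl : i.val - X.length < Y.length := by omega
    refine ⟨hl, ?_⟩
    have := key i
    rw [List.getElem?_append_right hi, List.getElem?_eq_getElem hl] at this
    exact Option.some.inj this

theorem stmt4_mp {n : ℕ} (f : Fin n → LinFun) (hf : ∀ i, 0 < (f i).a)
    (hnc : ¬ Colinear f) (hnp : ¬ PotentiallyIdentical f) (σ : Equiv.Perm (Fin n))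
    (h : IsMinimum f σ) :
      (Counterclockwise f σ ∧
        ∃ s t : Fin n,
          (¬ (f (σ s)).IsId ∧ ∀ i, i < s → (f (σ i)).IsId) ∧
          (¬ (f (σ t)).IsId ∧ ∀ i, t < i → (f (σ i)).IsId) ∧
          (permComp f σ).theta + Real.pi ∈ Icc2pi ((f (σ t)).theta) ((f (σ s)).theta)) := by
  obtain ⟨X, Y, e, hX, hY⟩ := min_star hf hnc hnp h
  set φ := (permComp f σ).theta + Real.pi
  refine ⟨?_, ?_⟩
  · rw [ccw_iff, e]
    exact CS_change 0 (star_CS hX hY)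
  obtain ⟨hlen, iX, iY⟩ := split_idx e
  have hne : ({i : Fin n | ¬ (f (σ i)).IsId}).Nonempty := by
    by_contra hc
    rw [Set.not_nonempty_iff_eq_empty] at hc
    apply hnc
    refine ⟨0, fun i => Or.inl ?_⟩
    by_contra hi
    have : σ.symm i ∈ ({i : Fin n | ¬ (f (σ i)).IsId}) := by simpa using hi
    rw [hc] at this
    exact this
  obtain ⟨s, hs, hs'⟩ := WellFounded.has_min (wellFounded_lt (α := Fin n)) _ hne
  obtain ⟨t, ht, ht'⟩ := WellFounded.has_min (wellFounded_gt (α := Fin n)) _ hne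
  simp only [Set.mem_setOf_eq] at hs hs' ht ht'
  refine ⟨s, t, ⟨hs, fun i hi => ?_⟩, ⟨ht, fun i hi => ?_⟩, ?_⟩
  · by_contra hc; exact hs' i hc hi
  · by_contra hc; exact ht' i hc hi
  obtain ⟨ks, hks⟩ := kap_cong φ (f (σ s))
  obtain ⟨kt, hkt⟩ := kap_cong φ (f (σ t))
  have ms := kap_mem φ (f (σ s))
  have mt := kap_mem φ (f (σ t))
  by_cases k0 : kap φ (f (σ t)) = 0
  · refine ⟨φ, φ + kap φ (f (σ s)), ⟨-kt, ?_⟩, ⟨-ks, ?_⟩, ?_, ?_, ?_, ?_⟩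
    · push_cast; linarith
    · push_cast; linarith
    · linarith
    · linarith
    · linarith
    · linarith
  · have htX : t.val < X.length := by
      by_contra hc
      obtain ⟨l, e1⟩ := iY t (not_lt.1 hc)
      exact k0 (hY _ (e1 ▸ List.getElem_mem l) ht)
    have mono : ∀ i j : Fin n, i ≤ j → j ≤ t → ¬ (f (σ i)).IsId → ¬ (f (σ j)).IsId →
        kap φ (f (σ i)) ≤ kap φ (f (σ j)) := by
      intro i j hij hjt hi hj
      rcases hij.lt_or_eq with hij | hij
      · have h1 : i.val < j.val := hij
        have h2 : j.val ≤ t.val := hjt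
        obtain ⟨l1, e1⟩ := iX i (by omega)
        obtain ⟨l2, e2⟩ := iX j (by omega)
        have := List.pairwise_iff_getElem.1 hX _ _ l1 l2 h1
        rw [e1, e2] at this
        exact this hi hj
      · rw [hij]
    have hst : s ≤ t := not_lt.1 (ht' s hs)
    have hlt : kap φ (f (σ s)) < kap φ (f (σ t)) := by
      refine lt_of_le_of_ne (mono s t hst le_rfl hs ht) ?_
      intro heq
      apply hnc
      refine ⟨φ + kap φ (f (σ s)), fun i => ?_⟩
      by_cases hi : (f i).IsId
      · exact Or.inl hi
      right; left
      obtain ⟨j, rfl⟩ := σ.surjective i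
      have h1 := mono s j (not_lt.1 (hs' j hi)) (not_lt.1 (ht' j hi)) hs hi
      have h2 := mono j t (not_lt.1 (ht' j hi)) le_rfl hi ht
      obtain ⟨kj, hkj⟩ := kap_cong φ (f (σ j))
      exact ⟨kj, by linarith⟩
    refine ⟨φ + kap φ (f (σ t)) - 2 * Real.pi, φ + kap φ (f (σ s)), ⟨-kt - 1, ?_⟩,
      ⟨-ks, ?_⟩, ?_, ?_, ?_, ?_⟩
    · push_cast; linarith
    · push_cast; linarith
    · linarith
    · linarith
    · linarith
    · linarith

theorem stmt4_mpr {n : ℕ} (f : Fin n → LinFun) (hf : ∀ i, 0 < (f i).a)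
    (hnc : ¬ Colinear f) (hnp : ¬ PotentiallyIdentical f) (σ : Equiv.Perm (Fin n))
    (hccw : Counterclockwise f σ) (s t : Fin n)
    (hs : ¬ (f (σ s)).IsId ∧ ∀ i, i < s → (f (σ i)).IsId)
    (ht : ¬ (f (σ t)).IsId ∧ ∀ i, t < i → (f (σ i)).IsId)
    (hI : (permComp f σ).theta + Real.pi ∈ Icc2pi ((f (σ t)).theta) ((f (σ s)).theta)) :
    IsMinimum f σ := by
  have hF : ¬ (permComp f σ).IsId := fun h => hnp ⟨σ, hccw, h⟩
  obtain ⟨hx, hy⟩ := opp_coord hF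
  set φ := (permComp f σ).theta + Real.pi
  obtain ⟨X, Y, e, hK⟩ := CS_split (CS_change φ ((ccw_iff f σ).1 hccw))
  have hp := mem_pos hf σ
  obtain ⟨hlen, iX, iY⟩ := split_idx e
  -- composite of the key-sorted rotation
  have hC : compList (Y ++ X) = permComp f σ := by
    unfold permComp at hx hy ⊢
    rw [e, cl_append] at hx hy ⊢
    rw [cl_append]
    have hYcase : (∀ g ∈ Y, ¬ g.IsId → kap φ g = 0) →
        (compList X).comp (compList Y) = (compList Y).comp (compList X) := by
      intro hY
      have y0 : ∀ g ∈ Y, yc φ g = 0 := fun g hg => y_of_kap_zero (hY g hg)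
      have pY : ∀ g ∈ Y, 0 < g.a := fun g hg => hp g (by simp [e, hg])
      have h1 : yc φ (compList Y) = 0 :=
        le_antisymm (y_nonpos pY fun g hg => (y0 g hg).le) (y_nonneg pY fun g hg => (y0 g hg).ge)
      rw [yc_comp, h1] at hy
      have h2 : yc φ (compList X) = 0 := by
        have := (cl_pos pY).ne'
        rcases mul_eq_zero.1 (by linarith : (compList Y).a * yc φ (compList X) = 0) with h | h
        · exact absurd h this
        · exact h
      apply comm_of_dt
      rw [dt_eq φ, h1, h2]; ring
    by_cases hsX : s.val < X.length
    · apply hYcase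
      by_cases htX : t.val < X.length
      · intro g hg hgi
        exfalso
        obtain ⟨i, hi, rfl⟩ := List.mem_iff_getElem.1 hg
        obtain ⟨l, e1⟩ := iY ⟨X.length + i, by omega⟩ (by simp)
        simp only [Nat.add_sub_cancel_left] at e1
        rw [e1] at hgi
        exact hgi (ht.2 _ (by rw [Fin.lt_def]; simp; omega))
      · obtain ⟨ls, es⟩ := iX s hsX
        obtain ⟨lt, et⟩ := iY t (not_lt.1 htX)
        obtain ⟨hKY, hKX, hKYX⟩ := List.pairwise_append.1 hK
        have hts : kap φ (f (σ t)) ≤ kap φ (f (σ s)) := by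
          have := hKYX _ (List.getElem_mem lt) _ (List.getElem_mem ls)
          rw [et, es] at this
          exact this ht.1 hs.1
        have ht0 : kap φ (f (σ t)) = 0 := by
          obtain ⟨l1, l2, ⟨k1, hk1⟩, ⟨k2, hk2⟩, h1, h2, h3, h4⟩ := hI
          have es : kap φ (f (σ s)) = l2 - φ :=
            kap_eq (-k2) (by linarith) (by linarith) (by push_cast; linarith)
          rcases h3.lt_or_eq with h3 | h3
          · have : kap φ (f (σ t)) = l1 - φ + 2 * Real.pi :=
              kap_eq (-k1 - 1) (by linarith) (by linarith) (by push_cast; linarith)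
            linarith
          · exact kap_eq (-k1) le_rfl Real.two_pi_pos (by push_cast; linarith)
        intro g hg hgi
        obtain ⟨i, hi, rfl⟩ := List.mem_iff_getElem.1 hg
        rcases lt_trichotomy i (t.val - X.length) with h | h | h
        · have := List.pairwise_iff_getElem.1 hKY _ _ hi lt h
          rw [et] at this
          have := this hgi ht.1
          rw [ht0] at this
          exact le_antisymm this (kap_mem φ _).1
        · subst h; rw [et]; exact ht0
        · exfalso
          obtain ⟨l, e1⟩ := iY ⟨X.length + i, by omega⟩ (by simp)
          simp only [Nat.add_sub_cancel_left] at e1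
          rw [e1] at hgi
          exact hgi (ht.2 _ (by rw [Fin.lt_def]; simp; omega))
    · apply comm_of_id
      apply cl_ids
      intro g hg
      obtain ⟨i, hi, rfl⟩ := List.mem_iff_getElem.1 hg
      obtain ⟨l, e1⟩ := iX ⟨i, by omega⟩ hi
      simp only at e1
      rw [e1]
      exact hs.2 _ (by rw [Fin.lt_def]; simp; omega)
  obtain ⟨ρ, hρ⟩ := Finite.exists_min (fun ρ : Equiv.Perm (Fin n) => (permComp f ρ).b)
  have hρm : IsMinimum f ρ := hρ
  suffices hle : (permComp f σ).b ≤ (permComp f ρ).b from fun τ => hle.trans (hρ τ)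
  obtain ⟨X₁, Y₁, e₁, hX₁, hY₁⟩ := min_star hf hnc hnp hρm
  have hcs := CS_change φ (star_CS hX₁ hY₁)
  rw [← e₁] at hcs
  obtain ⟨X', Y', e', hK'⟩ := CS_split hcs
  have hperm : (Y ++ X).Perm (Y' ++ X') := by
    have h1 : (permList f σ).Perm (List.ofFn f) := Equiv.Perm.ofFn_comp_perm σ f
    have h2 : (permList f ρ).Perm (List.ofFn f) := Equiv.Perm.ofFn_comp_perm ρ f
    have h3 := h1.trans h2.symm
    rw [e, e'] at h3
    exact List.perm_append_comm.trans (h3.trans List.perm_append_comm)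
  have hC' : compList (Y' ++ X') = permComp f σ := by
    rw [← hC]; exact (cl_sorted_eq φ hperm hK hK').symm
  have hp' := mem_pos hf ρ
  have pX : ∀ g ∈ X', 0 < g.a := fun g hg => hp' g (by simp [e', hg])
  have pY : ∀ g ∈ Y', 0 < g.a := fun g hg => hp' g (by simp [e', hg])
  rw [← hC', cl_append] at hx hy
  rw [← hC', cl_append]
  unfold permComp
  rw [e', cl_append]
  apply b_le_of_dt
  rw [xc_comp] at hx
  rw [yc_comp] at hy
  have pXa := cl_pos pX
  have hyY : 0 ≤ yc φ (compList Y') := by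
    by_cases hall : ∀ g ∈ Y', 0 ≤ yc φ g
    · exact y_nonneg pY hall
    · push Not at hall
      obtain ⟨g, hg, hgy⟩ := hall
      have hXn : yc φ (compList X') ≤ 0 := by
        apply y_nonpos pX
        intro h hh
        by_contra hc
        push Not at hc
        have h1 := kap_of_neg hgy
        have h2 := kap_of_pos hc
        have h3 := (List.pairwise_append.1 hK').2.2 g hg h hh (isId_of_y hgy.ne) (isId_of_y hc.ne')
        linarith
      have : 0 ≤ (compList X').a * yc φ (compList Y') := by linarith
      exact nonneg_of_mul_nonneg_right this pXa
  rw [dt_eq φ]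
  have e1 : yc φ (compList X') = - ((compList X').a * yc φ (compList Y')) := by linarith
  rw [e1]
  have := mul_nonneg_of_nonpos_of_nonpos hx.le (b := - yc φ (compList Y')) (by linarith)
  linarith

theorem stmt4_aux {n : ℕ} (f : Fin n → LinFun) (hf : ∀ i, 0 < (f i).a)
    (hnc : ¬ Colinear f) (hnp : ¬ PotentiallyIdentical f) (σ : Equiv.Perm (Fin n)) :
    IsMinimum f σ ↔
      (Counterclockwise f σ ∧
        ∃ s t : Fin n,
          (¬ (f (σ s)).IsId ∧ ∀ i, i < s → (f (σ i)).IsId) ∧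
          (¬ (f (σ t)).IsId ∧ ∀ i, t < i → (f (σ i)).IsId) ∧
          (permComp f σ).theta + Real.pi ∈ Icc2pi ((f (σ t)).theta) ((f (σ s)).theta)) := by
  constructor
  · exact stmt4_mp f hf hnc hnp σ
  · rintro ⟨h, s, t, hs, ht, hI⟩
    exact stmt4_mpr f hf hnc hnp σ h s t hs ht hI

/-- characterization of minimum permutations in the generic case. -/
theorem stmt4 {n : ℕ} (f : Fin n → LinFun) (hf : ∀ i, 0 < (f i).a)
    (hnc : ¬ Colinear f) (hnp : ¬ PotentiallyIdentical f) (σ : Equiv.Perm (Fin n)) :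
    IsMinimum f σ ↔
      (Counterclockwise f σ ∧
        ∃ s t : Fin n,
          (¬ (f (σ s)).IsId ∧ ∀ i, i < s → (f (σ i)).IsId) ∧
          (¬ (f (σ t)).IsId ∧ ∀ i, t < i → (f (σ i)).IsId) ∧
          (permComp f σ).theta + Real.pi ∈ Icc2pi ((f (σ t)).theta) ((f (σ s)).theta)) := by
  exact stmt4_aux f hf hnc hnp σ
end

section
/- Let f₁,…,f_n be monotone linear functions that are not colinear. Then every locally optimal permutation of [n] for f₁,…,f_n is counterclockwise. -/
namespace Stm7

def Cc (g : ℕ → LinFun) : ℕ → LinFun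
  | 0 => LinFun.idf
  | k + 1 => (g k).comp (Cc g k)

theorem comp_assoc' (f g h : LinFun) : (f.comp g).comp h = f.comp (g.comp h) := by
  simp only [LinFun.comp, LinFun.mk.injEq]
  constructor <;> ring

theorem idf_comp' (f : LinFun) : LinFun.idf.comp f = f := by
  simp [LinFun.comp, LinFun.idf]

theorem Cc_add (g : ℕ → LinFun) (s k : ℕ) :
    Cc g (s + k) = (Cc (fun i => g (s + i)) k).comp (Cc g s) := by
  induction k with
  | zero => simp [Cc, idf_comp']
  | succ k ih =>
    rw [← Nat.add_assoc]
    simp only [Cc]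
    rw [ih, comp_assoc']

theorem Cc_congr (g g' : ℕ → LinFun) (k : ℕ) (h : ∀ i < k, g i = g' i) : Cc g k = Cc g' k := by
  induction k with
  | zero => rfl
  | succ k ih =>
    simp only [Cc]
    rw [ih (fun i hi => h i (by omega)), h k (by omega)]

theorem Cc_pos (g : ℕ → LinFun) (h : ∀ i, 0 < (g i).a) (k : ℕ) : 0 < (Cc g k).a := by
  induction k with
  | zero => simp [Cc, LinFun.idf]
  | succ k ih =>
    simp only [Cc, LinFun.comp]
    exact mul_pos (h k) ih

theorem compList_ofFn (g : ℕ → LinFun) (n : ℕ) :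
    compList (List.ofFn fun i : Fin n => g i) = Cc g n := by
  induction n with
  | zero => simp [compList, Cc]
  | succ n ih =>
    rw [List.ofFn_succ', compList, List.concat_eq_append, List.foldl_append]
    simp only [compList] at ih
    simp [Cc, ih]

def seq {n : ℕ} (f : Fin n → LinFun) (σ : Equiv.Perm (Fin n)) (k : ℕ) : LinFun :=
  if h : k < n then f (σ ⟨k, h⟩) else LinFun.idf

theorem permComp_eq {n : ℕ} (f : Fin n → LinFun) (σ : Equiv.Perm (Fin n)) :
    permComp f σ = Cc (seq f σ) n := by
  rw [← compList_ofFn, permComp, permList]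
  congr 2
  funext i
  simp [seq]

theorem seq_pos {n : ℕ} (f : Fin n → LinFun) (hf : ∀ i, 0 < (f i).a) (σ : Equiv.Perm (Fin n))
    (k : ℕ) : 0 < (seq f σ k).a := by
  unfold seq
  split_ifs
  · exact hf _
  · simp [LinFun.idf]

theorem exists_swap {n : ℕ} (σ : Equiv.Perm (Fin n)) (l m r : ℕ) (h1 : l ≤ m) (h2 : m < r)
    (h3 : r < n) : ∃ μ : Equiv.Perm (Fin n), 
    (∀ i : Fin n, (i.val < l ∨ r < i.val) → μ i = σ i) ∧
    (∀ i : Fin n, ∀ _ : l ≤ i.val, ∀ _ : i.val < l + r - m,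
      μ i = σ ⟨i.val + m + 1 - l, by omega⟩) ∧
    (∀ i : Fin n, ∀ _ : l + r - m ≤ i.val, ∀ _ : i.val ≤ r,
      μ i = σ ⟨i.val + m - r, by omega⟩) := by
  let t : Fin n → Fin n := fun i =>
    if ha : i.val < l ∨ r < i.val then i
    else if hb : i.val < l + r - m then ⟨i.val + m + 1 - l, by omega⟩
    else ⟨i.val + m - r, by omega⟩
  have ht : Function.Injective t := by
    intro i j hij
    simp only [t] at hij
    apply Fin.ext
    split_ifs at hij <;> simp only [Fin.ext_iff] at hij <;> omega
  refine ⟨(Equiv.ofBijective t (Finite.injective_iff_bijective.mp ht)).trans σ, ?_, ?_, ?_⟩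
  · intro i hi
    simp [t, hi]
  · intro i hi hi'
    have : ¬ (i.val < l ∨ r < i.val) := by omega
    simp [t, this, hi']
  · intro i hi hi'
    have : ¬ (i.val < l ∨ r < i.val) := by omega
    have h' : ¬ (i.val < l + r - m) := by omega
    simp [t, this, h']

/-- prefix points -/
noncomputable def px (g : ℕ → LinFun) (k : ℕ) : ℝ := (Cc g k).b / (Cc g k).a
noncomputable def py (g : ℕ → LinFun) (k : ℕ) : ℝ := (1 - (Cc g k).a) / (Cc g k).a

theorem px_step (g : ℕ → LinFun) (h : ∀ i, 0 < (g i).a) (k : ℕ) :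
    px g (k+1) - px g k = (g k).b / (Cc g (k+1)).a := by
  have h1 := Cc_pos g h k
  have h2 := h k
  simp only [px, Cc, LinFun.comp]
  field_simp
  ring

theorem py_step (g : ℕ → LinFun) (h : ∀ i, 0 < (g i).a) (k : ℕ) :
    py g (k+1) - py g k = (1 - (g k).a) / (Cc g (k+1)).a := by
  have h1 := Cc_pos g h k
  have h2 := h k
  simp only [py, Cc, LinFun.comp]
  field_simp
  ring

theorem orient_lt {n : ℕ} (f : Fin n → LinFun) (hf : ∀ i, 0 < (f i).a)
    (σ : Equiv.Perm (Fin n)) (hlo : LocallyOptimal f σ) (i j k : ℕ) (hij : i < j) (hjk : j < k)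
    (hk : k ≤ n) :
    0 ≤ (px (seq f σ) j - px (seq f σ) i) * (py (seq f σ) k - py (seq f σ) j)
      - (py (seq f σ) j - py (seq f σ) i) * (px (seq f σ) k - px (seq f σ) j) := by
  obtain ⟨p, rfl⟩ : ∃ p, j = i + (p + 1) := ⟨j - i - 1, by omega⟩
  obtain ⟨q, rfl⟩ : ∃ q, k = i + (p + 1) + (q + 1) := ⟨k - (i + (p+1)) - 1, by omega⟩
  obtain ⟨t, rfl⟩ : ∃ t, n = i + (p + 1) + (q + 1) + t :=
    ⟨n - (i + (p + 1) + (q + 1)), by omega⟩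
  obtain ⟨μ, hm1, hm2, hm3⟩ := exists_swap σ i (i + p) (i + p + 1 + q) (by omega) (by omega)
    (by omega)
  have hle := hlo μ ⟨i, i + p, i + p + 1 + q, by omega, by omega, by omega, hm1, hm2, hm3⟩
  rw [permComp_eq, permComp_eq] at hle
  have hg := seq_pos f hf σ
  have e1 : Cc (seq f μ) i = Cc (seq f σ) i := by
    apply Cc_congr
    intro s hs
    have : s < i + (p + 1) + (q + 1) + t := by omega
    simp only [seq, this, dif_pos]
    rw [hm1 _ (Or.inl hs)]
  have e2 : Cc (fun s => seq f μ (i + s)) (q + 1)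
      = Cc (fun s => seq f σ (i + (p + 1) + s)) (q + 1) := by
    apply Cc_congr
    intro s hs
    have h1 : i + s < i + (p + 1) + (q + 1) + t := by omega
    have h2 : i + (p + 1) + s < i + (p + 1) + (q + 1) + t := by omega
    simp only [seq, h1, h2, dif_pos]
    rw [hm2 ⟨i + s, h1⟩ (by simp) (by simp only; omega)]
    congr 3
    simp only; omega
  have e3 : Cc (fun s => seq f μ (i + (q + 1) + s)) (p + 1)
      = Cc (fun s => seq f σ (i + s)) (p + 1) := by
    apply Cc_congr
    intro s hs
    have h1 : i + (q + 1) + s < i + (p + 1) + (q + 1) + t := by omega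
    have h2 : i + s < i + (p + 1) + (q + 1) + t := by omega
    simp only [seq, h1, h2, dif_pos]
    rw [hm3 ⟨i + (q + 1) + s, h1⟩ (by simp only; omega) (by simp only; omega)]
    congr 3
    simp only; omega
  have e4 : Cc (fun s => seq f μ (i + (q + 1) + (p + 1) + s)) t
      = Cc (fun s => seq f σ (i + (p + 1) + (q + 1) + s)) t := by
    apply Cc_congr
    intro s hs
    have h1 : i + (q + 1) + (p + 1) + s < i + (p + 1) + (q + 1) + t := by omega
    have h2 : i + (p + 1) + (q + 1) + s < i + (p + 1) + (q + 1) + t := by omega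
    simp only [seq, h1, h2, dif_pos]
    rw [hm1 ⟨i + (q + 1) + (p + 1) + s, h1⟩ (Or.inr (by simp only; omega))]
    congr 3
    omega
  have hsum : i + (p + 1) + (q + 1) + t = i + (q + 1) + (p + 1) + t := by omega
  have d1 : Cc (seq f μ) (i + (p + 1) + (q + 1) + t)
      = (Cc (fun s => seq f σ (i + (p + 1) + (q + 1) + s)) t).comp
        ((Cc (fun s => seq f σ (i + s)) (p + 1)).comp
        ((Cc (fun s => seq f σ (i + (p + 1) + s)) (q + 1)).comp (Cc (seq f σ) i))) := by
    rw [← e1, ← e2, ← e3, ← e4, ← Cc_add, ← Cc_add, ← Cc_add]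
    congr 1
  have d2 : Cc (seq f σ) (i + (p + 1)) = 
      (Cc (fun s => seq f σ (i + s)) (p + 1)).comp (Cc (seq f σ) i) := Cc_add _ _ _
  have d3 : Cc (seq f σ) (i + (p + 1) + (q + 1)) = 
      (Cc (fun s => seq f σ (i + (p + 1) + s)) (q + 1)).comp 
      ((Cc (fun s => seq f σ (i + s)) (p + 1)).comp (Cc (seq f σ) i)) := by
    rw [Cc_add, d2]
  have pA := Cc_pos _ hg i
  have pG := Cc_pos (fun s => seq f σ (i + s)) (fun s => hg _) (p + 1)
  have pH := Cc_pos (fun s => seq f σ (i + (p + 1) + s)) (fun s => hg _) (q + 1)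
  have pT := Cc_pos (fun s => seq f σ (i + (p + 1) + (q + 1) + s)) (fun s => hg _) t
  rw [d1, Cc_add, d3] at hle
  simp only [px, py, d2, d3]
  generalize Cc (fun s => seq f σ (i + (p + 1) + (q + 1) + s)) t = T at *
  generalize Cc (fun s => seq f σ (i + s)) (p + 1) = G at *
  generalize Cc (fun s => seq f σ (i + (p + 1) + s)) (q + 1) = H at *
  generalize Cc (seq f σ) i = A at *
  simp only [LinFun.comp] at *
  have hle2 : H.a * (G.a * A.b + G.b) + H.b ≤ G.a * (H.a * A.b + H.b) + G.b := by
    refine le_of_mul_le_mul_left ?_ pT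
    linarith
  have key : ((G.a * A.b + G.b) / (G.a * A.a) - A.b / A.a) *
      ((1 - H.a * (G.a * A.a)) / (H.a * (G.a * A.a)) - (1 - G.a * A.a) / (G.a * A.a)) -
    ((1 - G.a * A.a) / (G.a * A.a) - (1 - A.a) / A.a) *
      ((H.a * (G.a * A.b + G.b) + H.b) / (H.a * (G.a * A.a)) - (G.a * A.b + G.b) / (G.a * A.a))
      = (G.b * (1 - H.a) - (1 - G.a) * H.b) / ((G.a * A.a) * (H.a * (G.a * A.a))) := by
    field_simp
    ring
  rw [key]
  apply div_nonneg
  · nlinarith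
  · positivity

/-! Five point lemma, with the lowest point at the origin -/
section five
variable (ax ah bx bh cx ch dx dh : ℝ)

theorem upup
    (Hcd : 0 ≤ cx * dh - ch * dx) (Hbd : 0 ≤ bx * dh - bh * dx)
    (Habd : 0 ≤ (bx - ax) * (dh - bh) - (bh - ah) * (dx - bx))
    (Hacd : 0 ≤ (cx - ax) * (dh - ch) - (ch - ah) * (dx - cx))
    (hc : 0 ≤ ch) (hu : 0 < bh - ah) (hv : 0 < dh - ch) :
    0 ≤ (bx - ax) * (dh - ch) - (bh - ah) * (dx - cx) := by
  by_contra hneg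
  push Not at hneg
  obtain ⟨ux, rfl⟩ : ∃ ux, ax = bx - ux := ⟨bx - ax, by ring⟩
  obtain ⟨uh, rfl⟩ : ∃ uh, ah = bh - uh := ⟨bh - ah, by ring⟩
  obtain ⟨vx, rfl⟩ : ∃ vx, dx = cx + vx := ⟨dx - cx, by ring⟩
  obtain ⟨vh, rfl⟩ : ∃ vh, dh = ch + vh := ⟨dh - ch, by ring⟩
  obtain ⟨wx, rfl⟩ : ∃ wx, bx = cx - wx := ⟨cx - bx, by ring⟩
  obtain ⟨wh, rfl⟩ : ∃ wh, bh = ch - wh := ⟨ch - bh, by ring⟩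
  obtain ⟨D, hD⟩ : ∃ D, D = vx * uh - vh * ux := ⟨_, rfl⟩
  obtain ⟨cv, hcv⟩ : ∃ D, D = cx * vh - ch * vx := ⟨_, rfl⟩
  obtain ⟨cu, hcu⟩ : ∃ D, D = cx * uh - ch * ux := ⟨_, rfl⟩
  obtain ⟨uw, huw⟩ : ∃ D, D = ux * wh - uh * wx := ⟨_, rfl⟩
  obtain ⟨wv, hwv⟩ : ∃ D, D = wx * vh - wh * vx := ⟨_, rfl⟩
  have D0 : 0 < D := by rw [hD]; linarith
  have cv0 : 0 ≤ cv := by rw [hcv]; linarith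
  have uw0 : D ≤ uw := by rw [hD, huw]; linarith
  have wv0 : D ≤ wv := by rw [hD, hwv]; linarith
  have id1 : D * ((cx - wx) * (ch + vh) - (ch - wh) * (cx + vx))
      = D * cv - wv * cu - uw * cv - D * wv := by
    rw [hD, hcv, hcu, huw, hwv]; ring
  have id2 : D * ch = - cv * uh + cu * vh := by
    rw [hD, hcv, hcu]; ring
  have h1 : 0 ≤ D * cv - wv * cu - uw * cv - D * wv := by
    rw [← id1]; exact mul_nonneg D0.le Hbd
  have hu' : 0 < uh := by linarith
  have hv' : 0 < vh := by linarith
  have cu0 : cu < 0 := by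
    by_contra hh
    push Not at hh
    nlinarith [mul_nonneg (sub_nonneg.2 uw0) cv0, mul_nonneg (D0.le.trans wv0) hh,
      mul_pos D0 (lt_of_lt_of_le D0 wv0)]
  nlinarith [mul_nonneg D0.le hc, mul_nonneg cv0 hu'.le, mul_pos (neg_pos.2 cu0) hv']

theorem downdown
    (Hab : 0 ≤ ax * bh - ah * bx) (Hac : 0 ≤ ax * ch - ah * cx)
    (Habd : 0 ≤ (bx - ax) * (dh - bh) - (bh - ah) * (dx - bx))
    (Hacd : 0 ≤ (cx - ax) * (dh - ch) - (ch - ah) * (dx - cx))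
    (hb : 0 ≤ bh) (hu : bh - ah < 0) (hv : dh - ch < 0) :
    0 ≤ (bx - ax) * (dh - ch) - (bh - ah) * (dx - cx) := by
  have := upup (-dx) dh (-cx) ch (-bx) bh (-ax) ah (by linarith) (by linarith)
    (by linarith) (by linarith) hb (by linarith) (by linarith)
  linarith

theorem valley (xx xh : ℝ) (Hax : 0 ≤ ax * xh - ah * xx) (Hxd : 0 ≤ xx * dh - xh * dx)
    (Haxd : 0 ≤ (xx - ax) * (dh - xh) - (xh - ah) * (dx - xx)) (Had : 0 ≤ ax * dh - ah * dx)
    (hx : 0 ≤ xh) (h1 : xh < ah) (h2 : xh < dh) :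
    ax * xh - ah * xx = 0 ∧ xx * dh - xh * dx = 0 ∧ ax * dh - ah * dx = 0 := by
  obtain ⟨A, hA⟩ : ∃ D, D = ax * xh - ah * xx := ⟨_, rfl⟩
  obtain ⟨B, hB⟩ : ∃ D, D = xx * dh - xh * dx := ⟨_, rfl⟩
  have id : xh * ((xx - ax) * (dh - xh) - (xh - ah) * (dx - xx))
     = (xh - ah) * B + (xh - dh) * A := by rw [hA, hB]; ring
  have h0 := mul_nonneg hx Haxd
  rw [id] at h0
  rw [← hA] at Hax
  rw [← hB] at Hxd
  have hA0 : A = 0 := by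
    by_contra h
    have : 0 < A := lt_of_le_of_ne Hax (Ne.symm h)
    nlinarith
  have hB0 : B = 0 := by
    by_contra h
    have : 0 < B := lt_of_le_of_ne Hxd (Ne.symm h)
    nlinarith
  refine ⟨by linarith, by linarith, ?_⟩
  linarith

theorem onray (yx yh : ℝ) (H1 : 0 ≤ ax * yh - ah * yx) (H2 : 0 ≤ yx * dh - yh * dx)
    (Had : ax * dh - ah * dx = 0) (ha : 0 < ah) (hd : 0 < dh) :
    ax * yh - ah * yx = 0 ∧ yx * dh - yh * dx = 0 := by
  have id : dh * (ax * yh - ah * yx) + ah * (yx * dh - yh * dx) = 0 := by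
    linear_combination yh * Had
  have h1 := mul_nonneg hd.le H1
  have h2 := mul_nonneg ha.le H2
  constructor
  · have : dh * (ax * yh - ah * yx) = 0 := by linarith
    rcases mul_eq_zero.1 this with h | h
    · linarith
    · exact h
  · have : ah * (yx * dh - yh * dx) = 0 := by linarith
    rcases mul_eq_zero.1 this with h | h
    · linarith
    · exact h

theorem downup
    (Hab : 0 ≤ ax * bh - ah * bx) (Hac : 0 ≤ ax * ch - ah * cx) (Had : 0 ≤ ax * dh - ah * dx)
    (Hbd : 0 ≤ bx * dh - bh * dx) (Hcd : 0 ≤ cx * dh - ch * dx)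
    (Habd : 0 ≤ (bx - ax) * (dh - bh) - (bh - ah) * (dx - bx))
    (Hacd : 0 ≤ (cx - ax) * (dh - ch) - (ch - ah) * (dx - cx))
    (hb : 0 ≤ bh) (hc : 0 ≤ ch) (hu : bh - ah < 0) (hv : 0 < dh - ch) :
    ax * bh - ah * bx = 0 ∧ cx * dh - ch * dx = 0 ∧
    (bx - ax) * (dh - ch) - (bh - ah) * (dx - cx) = 0 := by
  have main : ax * bh - ah * bx = 0 ∧ bx * dh - bh * dx = 0 ∧ ax * dh - ah * dx = 0 ∧ 
      ax * ch - ah * cx = 0 ∧ cx * dh - ch * dx = 0 := by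
    rcases le_total bh ch with h | h
    · obtain ⟨h1, h2, h3⟩ := valley ax ah dx dh bx bh Hab Hbd Habd Had hb (by linarith)
        (by linarith)
      obtain ⟨h4, h5⟩ := onray ax ah dx dh cx ch Hac Hcd h3 (by linarith) (by linarith)
      exact ⟨h1, h2, h3, h4, h5⟩
    · obtain ⟨h1, h2, h3⟩ := valley ax ah dx dh cx ch Hac Hcd Hacd Had hc (by linarith)
        (by linarith)
      obtain ⟨h4, h5⟩ := onray ax ah dx dh bx bh Hab Hbd h3 (by linarith) (by linarith)
      exact ⟨h4, h5, h3, h1, h2⟩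
  obtain ⟨h1, h2, h3, h4, h5⟩ := main
  refine ⟨h1, h5, ?_⟩
  have hd : 0 < dh := by linarith
  have : bx * ch - bh * cx = 0 := by
    have : dh * (bx * ch - bh * cx) = 0 := by linear_combination ch * h2 - bh * h5
    rcases mul_eq_zero.1 this with h | h
    · linarith
    · exact h
  linarith

end five

/-- the polygon lemma -/
theorem polygon (n : ℕ) (x h : ℕ → ℝ)
    (hor : ∀ i j k, i < j → j < k → k ≤ n →
      0 ≤ (x j - x i) * (h k - h j) - (h j - h i) * (x k - x j)) :
    (∃ i, i < n ∧ h (i+1) - h i < 0 ∧ ∀ k < n, 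
      (x (k+1) - x k) * (h (i+1) - h i) - (h (k+1) - h k) * (x (i+1) - x i) = 0) ∨
    ∃ c, ∀ i j, i < n → j < n → i ≠ j →
      ((c ≤ i ∧ i ≤ j) ∨ (i ≤ j ∧ j < c) ∨ (c ≤ i ∧ j < c)) →
      (0 < h (i+1) - h i → 0 < h (j+1) - h j →
        0 ≤ (x (i+1) - x i) * (h (j+1) - h j) - (h (i+1) - h i) * (x (j+1) - x j)) ∧
      (h (i+1) - h i < 0 → h (j+1) - h j < 0 →
        0 ≤ (x (i+1) - x i) * (h (j+1) - h j) - (h (i+1) - h i) * (x (j+1) - x j)) ∧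
      ¬ (h (i+1) - h i < 0 ∧ 0 < h (j+1) - h j) := by
  have hcyc : ∀ i j k, i ≤ n → j ≤ n → k ≤ n →
      ((i ≤ j ∧ j ≤ k) ∨ (j ≤ k ∧ k ≤ i) ∨ (k ≤ i ∧ i ≤ j)) →
      0 ≤ (x j - x i) * (h k - h j) - (h j - h i) * (x k - x j) := by
    have base : ∀ i j k, i ≤ j → j ≤ k → k ≤ n →
        0 ≤ (x j - x i) * (h k - h j) - (h j - h i) * (x k - x j) := by
      intro i j k hij hjk hk
      rcases eq_or_lt_of_le hij with rfl | hij
      · simp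
      rcases eq_or_lt_of_le hjk with rfl | hjk
      · simp
      exact hor i j k hij hjk hk
    intro i j k hi hj hk hh
    rcases hh with hh | hh | hh
    · exact base i j k hh.1 hh.2 hk
    · have := base j k i hh.1 hh.2 hi
      linarith
    · have := base k i j hh.1 hh.2 hj
      linarith
  obtain ⟨c, hc, hmin⟩ := Finset.exists_min_image (Finset.range (n+1)) h ⟨0, by simp⟩
  have hcn : c ≤ n := by simp at hc; omega
  have hmin' : ∀ i ≤ n, 0 ≤ h i - h c := fun i hi => by
    have := hmin i (by simp; omega)
    linarith
  have H2 : ∀ i j, i ≤ n → j ≤ n → ((c ≤ i ∧ i ≤ j) ∨ (i ≤ j ∧ j ≤ c) ∨ (j ≤ c ∧ c ≤ i)) →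
      0 ≤ (x i - x c) * (h j - h c) - (h i - h c) * (x j - x c) := by
    intro i j hi hj hh
    have := hcyc c i j hcn hi hj (by omega)
    linarith
  by_cases hcol : ∃ i, i < n ∧ h (i+1) - h i < 0 ∧ ∀ k < n, 
      (x (k+1) - x k) * (h (i+1) - h i) - (h (k+1) - h k) * (x (i+1) - x i) = 0
  · exact Or.inl hcol
  refine Or.inr ⟨c, ?_⟩
  intro i j hi hj hne hpos
  have T1 := H2 i (i+1) (by omega) (by omega) (by omega)
  have T2 := H2 i j (by omega) (by omega) (by omega)
  have T3 := H2 i (j+1) (by omega) (by omega) (by omega)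
  have T4 := H2 (i+1) (j+1) (by omega) (by omega) (by omega)
  have T5 := H2 j (j+1) (by omega) (by omega) (by omega)
  have T6 := hcyc i (i+1) (j+1) (by omega) (by omega) (by omega) (by omega)
  have T7 := hcyc i j (j+1) (by omega) (by omega) (by omega) (by omega)
  have m1 := hmin' (i+1) (by omega)
  have m2 := hmin' j (by omega)
  refine ⟨?_, ?_, ?_⟩
  · intro hu hv
    have := upup (x i - x c) (h i - h c) (x (i+1) - x c) (h (i+1) - h c)
      (x j - x c) (h j - h c) (x (j+1) - x c) (h (j+1) - h c) T5 T4 (by linarith) (by linarith)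
      m2 (by linarith) (by linarith)
    linarith
  · intro hu hv
    have := downdown (x i - x c) (h i - h c) (x (i+1) - x c) (h (i+1) - h c)
      (x j - x c) (h j - h c) (x (j+1) - x c) (h (j+1) - h c) T1 T2 (by linarith) (by linarith)
      m1 (by linarith) (by linarith)
    linarith
  · rintro ⟨hu, hv⟩
    apply hcol
    obtain ⟨k1, k2, k3⟩ := downup (x i - x c) (h i - h c) (x (i+1) - x c) (h (i+1) - h c)
      (x j - x c) (h j - h c) (x (j+1) - x c) (h (j+1) - h c) T1 T2 T3 T4 T5
      (by linarith) (by linarith) m1 m2 (by linarith) (by linarith)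
    have key : ∀ k ≤ n,
        (x k - x c) * (h (i+1) - h i) - (h k - h c) * (x (i+1) - x i) = 0 := by
      intro k hk
      have a1 := hcyc k i (i+1) hk (by omega) (by omega) (by omega)
      have a2 := hcyc k j (j+1) hk (by omega) (by omega) (by omega)
      have b1 : (x k - x c) * (h (i+1) - h i) - (h k - h c) * (x (i+1) - x i) ≤ 0 := by
        linarith
      have b2 : (x k - x c) * (h (j+1) - h j) - (h k - h c) * (x (j+1) - x j) ≤ 0 := by
        linarith
      have b3 : (h (j+1) - h j) * ((x k - x c) * (h (i+1) - h i) - (h k - h c) * (x (i+1) - x i))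
        = (h (i+1) - h i) * ((x k - x c) * (h (j+1) - h j) - (h k - h c) * (x (j+1) - x j)) := by
        linear_combination - (h k - h c) * k3
      have b4 := mul_nonneg_of_nonpos_of_nonpos hu.le b2
      rw [← b3] at b4
      have := nonneg_of_mul_nonneg_right b4 hv
      linarith
    refine ⟨i, hi, hu, fun k hk => ?_⟩
    have := key k hk.le
    have := key (k+1) hk
    linarith

/-! angles -/

theorem theta_spec (f : LinFun) : 0 ≤ f.theta ∧ f.theta < 2 * Real.pi ∧
    f.b = ‖(⟨f.b, 1 - f.a⟩ : ℂ)‖ * Real.cos f.theta ∧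
    1 - f.a = ‖(⟨f.b, 1 - f.a⟩ : ℂ)‖ * Real.sin f.theta := by
  have hpi := Real.pi_pos
  have h1 := Complex.arg_le_pi ⟨f.b, 1 - f.a⟩
  have h2 := Complex.neg_pi_lt_arg ⟨f.b, 1 - f.a⟩
  have h3 := Complex.norm_mul_cos_arg ⟨f.b, 1 - f.a⟩
  have h4 := Complex.norm_mul_sin_arg ⟨f.b, 1 - f.a⟩
  unfold LinFun.theta
  split_ifs with h
  · exact ⟨h, by linarith, h3.symm, h4.symm⟩
  · rw [Real.cos_add_two_pi, Real.sin_add_two_pi]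
    exact ⟨by linarith, by linarith, h3.symm, h4.symm⟩

theorem norm_pos' (f : LinFun) (hf : ¬ f.IsId) : 0 < ‖(⟨f.b, 1 - f.a⟩ : ℂ)‖ := by
  rw [norm_pos_iff]
  intro h
  apply hf
  have h1 := congrArg Complex.re h
  have h2 := congrArg Complex.im h
  simp at h1 h2
  cases f
  simp only [LinFun.IsId, LinFun.idf, LinFun.mk.injEq] at *
  constructor <;> linarith

def Up (f : LinFun) : Prop := 0 < 1 - f.a ∨ (1 - f.a = 0 ∧ 0 < f.b)

theorem up_iff (f : LinFun) (hf : ¬ f.IsId) : Up f ↔ f.theta < Real.pi := by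
  obtain ⟨h0, h1, h2, h3⟩ := theta_spec f
  have hr := norm_pos' f hf
  have hpi := Real.pi_pos
  set r := ‖(⟨f.b, 1 - f.a⟩ : ℂ)‖
  unfold Up
  constructor
  · intro h
    by_contra hge
    push Not at hge
    have hs : Real.sin f.theta ≤ 0 := by
      have := Real.sin_nonneg_of_nonneg_of_le_pi (x := f.theta - Real.pi) (by linarith)
        (by linarith)
      rw [Real.sin_sub_pi] at this
      linarith
    rcases h with h | ⟨h, h'⟩
    · nlinarith
    · rcases eq_or_lt_of_le hge with he | hlt
      · rw [← he, Real.cos_pi] at h2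
        linarith
      · have := Real.sin_pos_of_pos_of_lt_pi (x := f.theta - Real.pi) (by linarith)
          (by linarith)
        rw [Real.sin_sub_pi] at this
        nlinarith
  · intro h
    rcases eq_or_lt_of_le h0 with he | hlt
    · right
      rw [← he, Real.sin_zero] at h3
      rw [← he, Real.cos_zero] at h2
      constructor <;> linarith
    · left
      rw [h3]
      exact mul_pos hr (Real.sin_pos_of_pos_of_lt_pi hlt h)

theorem cross_eq (f g : LinFun) : f.b * (1 - g.a) - (1 - f.a) * g.b =
    ‖(⟨f.b, 1 - f.a⟩ : ℂ)‖ * ‖(⟨g.b, 1 - g.a⟩ : ℂ)‖ * Real.sin (g.theta - f.theta) := by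
  obtain ⟨-, -, h2, h3⟩ := theta_spec f
  obtain ⟨-, -, h2', h3'⟩ := theta_spec g
  rw [Real.sin_sub]
  generalize ‖(⟨f.b, 1 - f.a⟩ : ℂ)‖ = r at *
  generalize ‖(⟨g.b, 1 - g.a⟩ : ℂ)‖ = s at *
  rw [h3, h3', h2, h2']
  ring

theorem theta_le (f g : LinFun) (hf : ¬ f.IsId) (hg : ¬ g.IsId)
    (h1 : Up f → Up g → 0 ≤ f.b * (1 - g.a) - (1 - f.a) * g.b)
    (h2 : ¬ Up f → ¬ Up g → 0 ≤ f.b * (1 - g.a) - (1 - f.a) * g.b)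
    (h3 : ¬ (¬ Up f ∧ Up g)) : f.theta ≤ g.theta := by
  have hrf := norm_pos' f hf
  have hrg := norm_pos' g hg
  obtain ⟨f0, f1, -, -⟩ := theta_spec f
  obtain ⟨g0, g1, -, -⟩ := theta_spec g
  rw [cross_eq, up_iff f hf, up_iff g hg] at *
  by_contra hlt
  push Not at hlt
  have hs : f.theta - g.theta < Real.pi →
      ‖(⟨f.b, 1 - f.a⟩ : ℂ)‖ * ‖(⟨g.b, 1 - g.a⟩ : ℂ)‖ * Real.sin (g.theta - f.theta) < 0 := by
    intro h
    have := Real.sin_pos_of_pos_of_lt_pi (x := f.theta - g.theta) (by linarith) h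
    rw [← neg_sub f.theta g.theta, Real.sin_neg]
    have := mul_pos (mul_pos hrf hrg) this
    linarith
  by_cases hfu : f.theta < Real.pi
  · have := h1 hfu (by linarith)
    have := hs (by linarith)
    linarith
  · by_cases hgu : g.theta < Real.pi
    · exact h3 ⟨hfu, hgu⟩
    · have := h2 hfu hgu
      have := hs (by linarith)
      linarith

theorem cong_of_cross (f g : LinFun) (hf : ¬ f.IsId) (hg : ¬ g.IsId)
    (h : f.b * (1 - g.a) - (1 - f.a) * g.b = 0) :
    Cong f.theta g.theta ∨ Cong f.theta (g.theta + Real.pi) := by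
  have hrf := norm_pos' f hf
  have hrg := norm_pos' g hg
  rw [cross_eq] at h
  have hs : Real.sin (g.theta - f.theta) = 0 := by
    rcases mul_eq_zero.1 h with h | h
    · exact absurd h (mul_pos hrf hrg).ne'
    · exact h
  obtain ⟨k, hk⟩ := Real.sin_eq_zero_iff.1 hs
  rcases Int.even_or_odd' k with ⟨m, rfl | rfl⟩
  · left
    refine ⟨-m, ?_⟩
    push_cast at hk ⊢
    linarith
  · right
    refine ⟨-m-1, ?_⟩
    push_cast at hk ⊢
    linarith

theorem exists_eps (n : ℕ) (g : ℕ → LinFun) : ∃ ε : ℝ, 0 < ε ∧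
    ∀ k < n, 1 - (g k).a ≠ 0 → ε * |(g k).b| < |1 - (g k).a| := by
  induction n with
  | zero => exact ⟨1, one_pos, by simp⟩
  | succ n ih =>
    obtain ⟨ε, h0, h⟩ := ih
    by_cases hz : 1 - (g n).a = 0
    · refine ⟨ε, h0, fun k hk hne => ?_⟩
      rcases Nat.lt_succ_iff_lt_or_eq.1 hk with hk | rfl
      · exact h k hk hne
      · exact absurd hz hne
    · have hp := abs_pos.2 hz
      have hb := abs_nonneg (g n).b
      refine ⟨min ε (|1 - (g n).a| / (|(g n).b| + 1)), lt_min h0 (by positivity), ?_⟩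
      intro k hk hne
      rcases Nat.lt_succ_iff_lt_or_eq.1 hk with hk | rfl
      · refine lt_of_le_of_lt ?_ (h k hk hne)
        exact mul_le_mul_of_nonneg_right (min_le_left _ _) (abs_nonneg _)
      · refine lt_of_le_of_lt
          (mul_le_mul_of_nonneg_right (min_le_right _ _) (abs_nonneg _)) ?_
        rw [div_mul_eq_mul_div, div_lt_iff₀ (by positivity)]
        nlinarith

theorem up_eps (f : LinFun) (hf : ¬ f.IsId) (ε : ℝ) (h0 : 0 < ε)
    (h : 1 - f.a ≠ 0 → ε * |f.b| < |1 - f.a|) :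
    (Up f → 0 < 1 - f.a + ε * f.b) ∧ (¬ Up f → 1 - f.a + ε * f.b < 0) := by
  have e1 := mul_le_mul_of_nonneg_left (le_abs_self f.b) h0.le
  have e2 := mul_le_mul_of_nonneg_left (neg_abs_le f.b) h0.le
  unfold Up
  rcases lt_trichotomy (1 - f.a) 0 with hy | hy | hy
  · have := h hy.ne
    rw [abs_of_neg hy] at this
    constructor
    · rintro (h | ⟨h, -⟩) <;> linarith
    · intro _
      linarith
  · rw [hy]
    rcases lt_trichotomy f.b 0 with hx | hx | hx
    · constructor
      · rintro (h | ⟨h, h'⟩) <;> linarith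
      · intro _
        nlinarith
    · exfalso
      apply hf
      cases f
      simp only [LinFun.IsId, LinFun.idf, LinFun.mk.injEq] at *
      constructor <;> linarith
    · constructor
      · intro _
        have := mul_pos h0 hx
        linarith
      · intro h
        exact absurd (Or.inr ⟨rfl, hx⟩) h
  · have := h hy.ne'
    rw [abs_of_pos hy] at this
    constructor
    · intro _
      linarith
    · intro h
      exact absurd (Or.inl hy) h

end Stm7

open Stm7 in
/-- locally optimal permutations of non-colinear monotone linear functions
are counterclockwise. -/
theorem stmt7 {n : ℕ} (f : Fin n → LinFun) (hf : ∀ i, 0 < (f i).a)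
    (hnc : ¬ Colinear f) (σ : Equiv.Perm (Fin n)) (hlo : LocallyOptimal f σ) :
    Counterclockwise f σ := by
  have hor := orient_lt f hf σ hlo
  have hg := seq_pos f hf σ
  have hseq : ∀ i : Fin n, seq f σ i = f (σ i) := fun i => by simp [seq]
  generalize seq f σ = g at *
  obtain ⟨ε, hε, hεs⟩ := exists_eps n g
  have hpos : ∀ k, 0 < (Cc g (k+1)).a := fun k => Cc_pos g hg (k+1)
  have hst : ∀ k, (py g (k+1) + ε * px g (k+1)) - (py g k + ε * px g k)
      = (1 - (g k).a + ε * (g k).b) / (Cc g (k+1)).a := by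
    intro k
    have h1 := px_step g hg k
    have h2 := py_step g hg k
    rw [add_div, mul_div_assoc, ← h1, ← h2]
    ring
  have hcr : ∀ i j, (px g (i+1) - px g i) *
      ((py g (j+1) + ε * px g (j+1)) - (py g j + ε * px g j))
      - ((py g (i+1) + ε * px g (i+1)) - (py g i + ε * px g i)) * (px g (j+1) - px g j)
      = ((g i).b * (1 - (g j).a) - (1 - (g i).a) * (g j).b) /
        ((Cc g (i+1)).a * (Cc g (j+1)).a) := by
    intro i j
    have h1 := hpos i
    have h2 := hpos j
    rw [hst, hst, px_step g hg, px_step g hg]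
    field_simp
    ring
  rcases polygon n (px g) (fun k => py g k + ε * px g k) (by
      intro i j k hij hjk hk
      have := hor i j k hij hjk hk
      linarith) with ⟨i, hi, hneg, hall⟩ | ⟨c, hc⟩
  · exfalso
    apply hnc
    have hni : ¬ (g i).IsId := by
      intro h
      rw [hst, h] at hneg
      simp [LinFun.idf] at hneg
    refine ⟨(g i).theta, fun k' => ?_⟩
    obtain ⟨k, rfl⟩ := σ.surjective k'
    rw [← hseq]
    by_cases hk : (g k).IsId
    · exact Or.inl hk
    · right
      apply cong_of_cross _ _ hk hni
      have := hall k k.2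
      rw [hcr] at this
      rcases div_eq_zero_iff.1 this with h | h
      · exact h
      · exact absurd h (mul_pos (hpos _) (hpos _)).ne'
  · refine ⟨c, fun i j hi hj hh => ?_⟩
    by_cases hij : i = j
    · rw [hij]
    rw [← hseq] at hi hj
    rw [← hseq i, ← hseq j]
    obtain ⟨c1, c2, c3⟩ := hc i j i.2 j.2 (fun h => hij (Fin.ext h)) hh
    rw [hcr, hst, hst] at c1 c2
    rw [hst, hst] at c3
    obtain ⟨ui, di⟩ := up_eps (g i) hi ε hε (hεs i i.2)
    obtain ⟨uj, dj⟩ := up_eps (g j) hj ε hε (hεs j j.2)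
    have hpp := mul_pos (hpos i) (hpos j)
    apply theta_le _ _ hi hj
    · intro h1 h2
      have := c1 (div_pos (ui h1) (hpos _)) (div_pos (uj h2) (hpos _))
      have := mul_nonneg this hpp.le
      rwa [div_mul_cancel₀ _ hpp.ne'] at this
    · intro h1 h2
      have := c2 (div_neg_of_neg_of_pos (di h1) (hpos _)) (div_neg_of_neg_of_pos (dj h2) (hpos _))
      have := mul_nonneg this hpp.le
      rwa [div_mul_cancel₀ _ hpp.ne'] at this
    · rintro ⟨h1, h2⟩
      exact c3 ⟨div_neg_of_neg_of_pos (di h1) (hpos _), div_pos (uj h2) (hpos _)⟩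
end
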